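/- arXiv:1003.1984 — 3 statements merged into one kernel-verified Lean document; each statement's English description precedes it below -/
import Mathlib

section
/- Let n ≥ 3. There exists a bound q₀ (depending on n) such that for every finite field F with |F| ≥ q₀ and char F ≠ 2, there is no bijective map Φ : M_n(F) → M_n(F) satisfying per A = det Φ(A) for all A ∈ M_n(F). -/
/-!
Both sets of zeros are measured by their density among all `n × n` matrices over `F`, `q = |F|`.
Invertible matrices have density at most `(1 - 1/q) (1 - 1/q²)`, so singular ones have density at
least `1/q + 1/q² - 1/q³`, where the term `1/q²` reflects that all maximal minors of an
`(n - 1) × n` matrix vanish in codimension two. For permanents this codimension is three: a row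
`b` extends an `(n - 2) × n` matrix `B` to one all of whose maximal permanents vanish exactly when
`b` is in the kernel of the symmetric matrix with zero diagonal formed by the maximal permanents of
`B`, and the determinant `2prs` of a generic `3 × 3` principal submatrix is nonzero as `2 ≠ 0`.
Hence the permanent has fewer zeros than the determinant once `q` is large.
-/

open Finset Matrix
open scoped BigOperators

section ColumnPermanent

theorem vecCons_injective_and_forall_mem_iff {ι : Type*} [DecidableEq ι] {m : ℕ} {l : ι}
    {g : Fin m → ι} {S : Finset ι} :
    ((vecCons l g).Injective ∧ ∀ i, vecCons l g i ∈ S) ↔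
      l ∈ S ∧ g.Injective ∧ ∀ i, g i ∈ S.erase l := by
  simp only [vecCons, Fin.cons_injective_iff, Fin.forall_fin_succ, Fin.cons_zero, Fin.cons_succ,
    mem_erase, Set.mem_range]
  grind

variable {ι R : Type*} [Fintype ι] [DecidableEq ι] [CommSemiring R] {m : ℕ}

/-- The permanent of the rectangular matrix with rows `B` restricted to the columns in `S`: a sum
over the injections of the rows into `S`. It is a maximal subpermanent of `B` when `#S = m`. -/
def columnPermanent (B : Fin m → ι → R) (S : Finset ι) : R :=
  ∑ f : Fin m → ι with f.Injective ∧ ∀ i, f i ∈ S, ∏ i, B i (f i)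

theorem columnPermanent_zero (B : Fin 0 → ι → R) (S : Finset ι) : columnPermanent B S = 1 := by
  simp [columnPermanent, Function.injective_of_subsingleton]

theorem columnPermanent_vecCons (b : ι → R) (B : Fin m → ι → R) (S : Finset ι) :
    columnPermanent (vecCons b B) S = ∑ l ∈ S, b l * columnPermanent B (S.erase l) := by
  calc columnPermanent (vecCons b B) S
    _ = ∑ l : ι, ∑ g : Fin m → ι, if l ∈ S ∧ g.Injective ∧ ∀ i, g i ∈ S.erase l then
          b l * ∏ i, B i (g i) else 0 := by
      unfold columnPermanent
      rw [sum_filter, ← (Fin.consEquiv fun _ => ι).sum_comp,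
        Fintype.sum_prod_type]
      refine sum_congr rfl fun l _ => sum_congr rfl fun g _ => ?_
      exact if_congr vecCons_injective_and_forall_mem_iff (Fin.prod_univ_succ _) rfl
    _ = ∑ l ∈ S, b l * columnPermanent B (S.erase l) := by
      simp only [ite_and (P := _ ∈ S), columnPermanent, sum_filter, mul_sum, mul_ite, mul_zero,
        sum_ite_irrel, sum_const_zero, sum_ite_mem, univ_inter]

theorem permanent_eq_columnPermanent {n : ℕ} (A : Matrix (Fin n) (Fin n) R) :
    A.permanent = columnPermanent A univ := by
  rw [← permanent_transpose]
  unfold permanent columnPermanent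
  refine sum_bij (fun σ _ => σ) (fun σ _ => by simp [σ.injective])
    (fun _ _ _ _ h => DFunLike.coe_injective h) (fun f hf => ?_) fun _ _ => rfl
  have hf : f.Injective := (mem_filter.mp hf).2.1
  exact ⟨.ofBijective f hf.bijective_of_finite, mem_univ _, rfl⟩

/-- The coefficient matrix of the Laplace expansion along a row `b` added on top of `B`: applied
to `b` it gives the maximal subpermanents of the extended matrix with columns in `U`. -/
def permanentCofactor (B : Fin m → ι → R) (U : Finset ι) :
    Matrix (U.powersetCard (m + 1)) ι R :=
  .of fun S l => if l ∈ S.1 then columnPermanent B (S.1.erase l) else 0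

theorem permanentCofactor_mulVec (B : Fin m → ι → R) (U : Finset ι) (b : ι → R) :
    permanentCofactor B U *ᵥ b = fun S => columnPermanent (vecCons b B) S.1 := by
  ext S
  simp [permanentCofactor, mulVec, dotProduct, columnPermanent_vecCons, mul_comm]

/-- The row families `B` whose restriction to the columns in `U` has permanental rank less than
`m`, i.e. has only vanishing maximal subpermanents. -/
def permanentDeficient (R : Type*) [CommSemiring R] [Fintype R] [DecidableEq R] (m : ℕ)
    (U : Finset ι) : Finset (Fin m → ι → R) :=
  {B | ∀ S ∈ U.powersetCard m, columnPermanent B S = 0}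

variable [Fintype R] [DecidableEq R]

theorem permanentDeficient_zero (U : Finset ι) [Nontrivial R] : permanentDeficient R 0 U = ∅ := by
  simp [permanentDeficient, columnPermanent_zero]

theorem mem_permanentDeficient_of_card_eq {B : Fin m → ι → R} {U : Finset ι} (hU : #U = m) :
    B ∈ permanentDeficient R m U ↔ columnPermanent B U = 0 := by
  subst hU
  simp [permanentDeficient]

theorem vecCons_mem_permanentDeficient {B : Fin m → ι → R} {U : Finset ι} {b : ι → R} :
    vecCons b B ∈ permanentDeficient R (m + 1) U ↔ permanentCofactor B U *ᵥ b = 0 := by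
  rw [permanentCofactor_mulVec]
  simp [permanentDeficient, funext_iff]

end ColumnPermanent

section Rank

variable {F ι : Type*} [Field F] [Fintype ι]

theorem card_le_rank_of_submatrix_det_ne_zero {κ κ' : Type*} [Fintype κ'] [DecidableEq κ']
    {M : Matrix κ ι F} (r : κ' → κ) (c : κ' → ι) (h : (M.submatrix r c).det ≠ 0) :
    Fintype.card κ' ≤ M.rank :=
  (rank_of_det_ne_zero h).symm.trans_le (M.rank_submatrix_le r c)

variable [DecidableEq ι] {m : ℕ}

theorem card_sdiff_le_rank_permanentCofactor {B : Fin m → ι → F} {S U : Finset ι} (hS : #S = m)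
    (hSU : S ⊆ U) (hB : columnPermanent B S ≠ 0) :
    #(U \ S) ≤ (permanentCofactor B U).rank := by
  let insertRow : ↥(U \ S) → U.powersetCard (m + 1) := fun t =>
    ⟨insert t.1 S, by
      obtain ⟨htU, htS⟩ := mem_sdiff.mp t.2
      exact mem_powersetCard.mpr ⟨insert_subset htU hSU, by rw [card_insert_of_notMem htS, hS]⟩⟩
  have submatrix_eq : (permanentCofactor B U).submatrix insertRow (Subtype.val : ↥(U \ S) → ι) =
      columnPermanent B S • 1 := by
    ext t t'
    have htS := (mem_sdiff.mp t.2).2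
    have htS' := (mem_sdiff.mp t'.2).2
    by_cases h : t = t'
    · subst h
      simp [permanentCofactor, insertRow, htS]
    · have : t'.1 ≠ t.1 := fun h' => h (Subtype.ext h'.symm)
      simp [permanentCofactor, insertRow, htS', h, this]
  rw [← Fintype.card_coe]
  refine card_le_rank_of_submatrix_det_ne_zero insertRow Subtype.val ?_
  simp [submatrix_eq, hB]

theorem three_le_rank_permanentCofactor (h2 : (2 : F) ≠ 0) (hι : Fintype.card ι = m + 2)
    {B : Fin m → ι → F} {x y z : ι} (hxy : x ≠ y) (hxz : x ≠ z) (hyz : y ≠ z)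
    (hz : columnPermanent B {x, y}ᶜ ≠ 0) (hy : columnPermanent B {x, z}ᶜ ≠ 0)
    (hx : columnPermanent B {y, z}ᶜ ≠ 0) :
    3 ≤ (permanentCofactor B univ).rank := by
  let complRow : ι → powersetCard (m + 1) (univ : Finset ι) := fun u =>
    ⟨{u}ᶜ, by simp [mem_powersetCard, card_compl, hι]⟩
  have cofactor_eq (u v : ι) : permanentCofactor B univ (complRow u) v =
      if u = v then 0 else columnPermanent B {u, v}ᶜ := by
    rw [pair_comm, compl_insert]
    simp [permanentCofactor, complRow, eq_comm]
  have submatrix_eq : (permanentCofactor B univ).submatrix (complRow ∘ ![x, y, z]) ![x, y, z] =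
      !![0, columnPermanent B {x, y}ᶜ, columnPermanent B {x, z}ᶜ;
        columnPermanent B {x, y}ᶜ, 0, columnPermanent B {y, z}ᶜ;
        columnPermanent B {x, z}ᶜ, columnPermanent B {y, z}ᶜ, 0] := by
    ext i j
    rw [submatrix_apply, Function.comp_apply, cofactor_eq]
    fin_cases i <;> fin_cases j <;>
      simp [hxy, hxz, hyz, hxy.symm, hxz.symm, hyz.symm, pair_comm]
  have det_eq :
      ((permanentCofactor B univ).submatrix (complRow ∘ ![x, y, z]) ![x, y, z]).det =
        2 * columnPermanent B {x, y}ᶜ * columnPermanent B {x, z}ᶜ * columnPermanent B {y, z}ᶜ := by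
    rw [submatrix_eq, det_fin_three]
    simp only [of_apply, cons_val', cons_val_zero, cons_val_one, cons_val_fin_one, Matrix.cons_val]
    ring
  rw [← Fintype.card_fin 3]
  refine card_le_rank_of_submatrix_det_ne_zero (complRow ∘ ![x, y, z]) ![x, y, z] ?_
  rw [det_eq]
  exact mul_ne_zero (mul_ne_zero (mul_ne_zero h2 hz) hy) hx

theorem le_rank_permanentCofactor [Fintype F] [DecidableEq F] {B : Fin m → ι → F} {U : Finset ι}
    {d : ℕ} (hU : #U = m + d) (hB : B ∉ permanentDeficient F m U) :
    d ≤ (permanentCofactor B U).rank := by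
  obtain ⟨S, hSU, hS, hne⟩ : ∃ S ⊆ U, #S = m ∧ columnPermanent B S ≠ 0 := by
    simpa [permanentDeficient] using hB
  calc d = #(U \ S) := by rw [card_sdiff_of_subset hSU]; omega
    _ ≤ _ := card_sdiff_le_rank_permanentCofactor hS hSU hne

end Rank

section Density

theorem dens_filter_eq_expect {α : Type*} [Fintype α] (p : α → Prop) [DecidablePred p] :
    dens {a | p a} = 𝔼 a, if p a then (1 : ℚ≥0) else 0 := by
  simp [expect_univ, dens_eq_card_div_card, div_eq_inv_mul]

theorem dens_filter_eq_expect_vecCons {α : Type*} [Fintype α] {m : ℕ}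
    (p : (Fin (m + 1) → α) → Prop) [DecidablePred p] :
    dens {A | p A} = 𝔼 B : Fin m → α, dens {b | p (vecCons b B)} := by
  simp_rw [dens_filter_eq_expect]
  rw [expect_comm, ← expect_product', univ_product_univ]
  exact (Fintype.expect_equiv (Fin.consEquiv fun _ => α) _ _ fun _ => rfl).symm

variable {ι F : Type*} [Fintype ι] [DecidableEq ι] [Field F] [Fintype F] {m : ℕ}

local notation "q" => (Fintype.card F : ℚ≥0)

theorem antitone_one_div_card_pow : Antitone fun d : ℕ => 1 / q ^ d :=
  fun _ _ h => one_div_pow_le_one_div_pow_of_le (Nat.one_le_cast.mpr Fintype.card_pos) h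

theorem one_div_card_pow_le_one (d : ℕ) : 1 / q ^ d ≤ 1 := by
  simpa using antitone_one_div_card_pow (F := F) d.zero_le

variable [DecidableEq F]

theorem dens_filter_mulVec_eq_zero {κ : Type*} [Fintype κ] (M : Matrix κ ι F) :
    dens {b | M *ᵥ b = 0} = 1 / q ^ M.rank := by
  have card_ker : #{b | M *ᵥ b = 0} =
      Fintype.card F ^ Module.finrank F M.mulVecLin.ker := by
    rw [← Nat.card_eq_fintype_card, ← Module.natCard_eq_pow_finrank, ← Fintype.card_subtype,
      ← Nat.card_eq_fintype_card]
    rfl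
  have rank_nullity : M.rank + Module.finrank F M.mulVecLin.ker = Fintype.card ι := by
    rw [rank, LinearMap.finrank_range_add_finrank_ker, Module.finrank_fintype_fun_eq_card]
  rw [dens, card_ker, Fintype.card_fun, ← rank_nullity]
  push_cast
  rw [pow_add, div_mul_cancel_right₀ (by simp), one_div]

theorem dens_permanentDeficient_succ (U : Finset ι) :
    (permanentDeficient F (m + 1) U).dens =
      𝔼 B : Fin m → ι → F, 1 / q ^ (permanentCofactor B U).rank := by
  rw [permanentDeficient, dens_filter_eq_expect_vecCons]
  refine expect_congr rfl fun B _ => ?_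
  rw [← dens_filter_mulVec_eq_zero]
  simp [← vecCons_mem_permanentDeficient, permanentDeficient]

theorem dens_permanentDeficient_succ_le {U : Finset ι} {d : ℕ} (hU : #U = m + d) :
    (permanentDeficient F (m + 1) U).dens ≤ (permanentDeficient F m U).dens + 1 / q ^ d := by
  calc (permanentDeficient F (m + 1) U).dens
    _ = 𝔼 B : Fin m → ι → F, 1 / q ^ (permanentCofactor B U).rank :=
      dens_permanentDeficient_succ U
    _ ≤ 𝔼 B : Fin m → ι → F, ((if B ∈ permanentDeficient F m U then 1 else 0) + 1 / q ^ d) := by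
      refine expect_le_expect fun B _ => ?_
      split_ifs with hB
      · exact le_add_right (one_div_card_pow_le_one _)
      · exact le_add_left (antitone_one_div_card_pow (le_rank_permanentCofactor hU hB))
    _ = (permanentDeficient F m U).dens + 1 / q ^ d := by
      rw [expect_add_distrib, ← dens_filter_eq_expect, Fintype.expect_const, filter_univ_mem]

theorem dens_permanentDeficient_le {U : Finset ι} {d : ℕ} (hU : #U = m + d) :
    (permanentDeficient F m U).dens ≤ m / q ^ (d + 1) := by
  induction m generalizing d with
  | zero => simp [permanentDeficient_zero]
  | succ m ih =>
    have hU : #U = m + (d + 1) := by omega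
    calc (permanentDeficient F (m + 1) U).dens
      _ ≤ (permanentDeficient F m U).dens + 1 / q ^ (d + 1) := dens_permanentDeficient_succ_le hU
      _ ≤ m * (1 / q ^ (d + 1 + 1)) + 1 / q ^ (d + 1) := by
        rw [mul_one_div]
        gcongr
        exact ih hU
      _ ≤ m * (1 / q ^ (d + 1)) + 1 / q ^ (d + 1) := by
        gcongr (m : ℚ≥0) * ?_ + _
        exact antitone_one_div_card_pow (F := F) (d + 1).le_succ
      _ = (m + 1 : ℕ) / q ^ (d + 1) := by push_cast; ring

theorem dens_columnPermanent_eq_zero_le {S : Finset ι} (hS : #S = m) :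
    dens {B : Fin m → ι → F | columnPermanent B S = 0} ≤ m / q := by
  simpa [← mem_permanentDeficient_of_card_eq hS] using dens_permanentDeficient_le (d := 0) hS

theorem dens_columnPermanent_compl_pair_eq_zero_le (hι : Fintype.card ι = m + 2) {x y z : ι}
    (hxy : x ≠ y) (hxz : x ≠ z) (hyz : y ≠ z) :
    dens {B : Fin m → ι → F | columnPermanent B {x, y}ᶜ = 0 ∨ columnPermanent B {x, z}ᶜ = 0 ∨
      columnPermanent B {y, z}ᶜ = 0} ≤ 3 * m / q := by
  have dens_le {u v : ι} (huv : u ≠ v) :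
      dens {B : Fin m → ι → F | columnPermanent B {u, v}ᶜ = 0} ≤ m / q :=
    dens_columnPermanent_eq_zero_le (by rw [card_compl, card_pair huv]; omega)
  have three_mul_div : (3 * m / q : ℚ≥0) = m / q + (m / q + m / q) := by ring
  rw [filter_or, filter_or, three_mul_div]
  exact (dens_union_le ..).trans <| add_le_add (dens_le hxy) <|
    (dens_union_le ..).trans <| add_le_add (dens_le hxz) (dens_le hyz)

theorem dens_permanentDeficient_univ_le (h2 : (2 : F) ≠ 0) (hm : m ≠ 0)
    (hι : Fintype.card ι = m + 2) :
    (permanentDeficient F (m + 1) (univ : Finset ι)).dens ≤ (4 * m + 1) / q ^ 3 := by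
  obtain ⟨x, y, z, hxy, hxz, hyz⟩ := Fintype.two_lt_card_iff.mp (show 2 < Fintype.card ι by omega)
  let W : Finset (Fin m → ι → F) := {B | columnPermanent B {x, y}ᶜ = 0 ∨
    columnPermanent B {x, z}ᶜ = 0 ∨ columnPermanent B {y, z}ᶜ = 0}
  calc (permanentDeficient F (m + 1) univ).dens
    _ = 𝔼 B : Fin m → ι → F, 1 / q ^ (permanentCofactor B univ).rank :=
      dens_permanentDeficient_succ univ
    _ ≤ 𝔼 B : Fin m → ι → F, ((if B ∈ permanentDeficient F m univ then 1 else 0) +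
          ((if B ∈ W then 1 else 0) * (1 / q ^ 2) + 1 / q ^ 3)) := by
      refine expect_le_expect fun B _ => ?_
      split_ifs with hB hBW hBW
      · exact le_add_right (one_div_card_pow_le_one _)
      · exact le_add_right (one_div_card_pow_le_one _)
      · rw [zero_add, one_mul]
        exact le_add_right (antitone_one_div_card_pow (le_rank_permanentCofactor hι hB))
      · rw [zero_add, zero_mul, zero_add]
        simp only [W, mem_filter_univ, not_or] at hBW
        exact antitone_one_div_card_pow
          (three_le_rank_permanentCofactor h2 hι hxy hxz hyz hBW.1 hBW.2.1 hBW.2.2)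
    _ = (permanentDeficient F m (univ : Finset ι)).dens + (W.dens * (1 / q ^ 2) + 1 / q ^ 3) := by
      simp only [expect_add_distrib, ← expect_mul, ← dens_filter_eq_expect, Fintype.expect_const,
        filter_univ_mem]
    _ ≤ m / q ^ 3 + (3 * m / q * (1 / q ^ 2) + 1 / q ^ 3) := by
      gcongr
      · exact dens_permanentDeficient_le hι
      · exact dens_columnPermanent_compl_pair_eq_zero_le hι hxy hxz hyz
    _ = (4 * m + 1) / q ^ 3 := by field

theorem dens_permanent_eq_zero_le (h2 : (2 : F) ≠ 0) (hm : m ≠ 0) :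
    dens {A : Matrix (Fin (m + 2)) (Fin (m + 2)) F | A.permanent = 0} ≤
      (4 * m + 1) / q ^ 3 + 1 / q := by
  have zeros_eq : ({A : Matrix (Fin (m + 2)) (Fin (m + 2)) F | A.permanent = 0} : Finset _) =
      (permanentDeficient F (m + 2) univ).map Matrix.of.toEmbedding := by
    ext A
    rw [mem_map_equiv, mem_permanentDeficient_of_card_eq (by simp), mem_filter_univ,
      permanent_eq_columnPermanent]
    rfl
  calc dens {A : Matrix (Fin (m + 2)) (Fin (m + 2)) F | A.permanent = 0}
    _ = (permanentDeficient F (m + 2) (univ : Finset (Fin (m + 2)))).dens := by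
      rw [zeros_eq, dens_map_equiv]
    _ ≤ (permanentDeficient F (m + 1) (univ : Finset (Fin (m + 2)))).dens + 1 / q ^ 1 :=
      dens_permanentDeficient_succ_le (by simp)
    _ ≤ (4 * m + 1) / q ^ 3 + 1 / q := by
      rw [pow_one]
      gcongr
      exact dens_permanentDeficient_univ_le h2 hm (by simp)

theorem dens_det_ne_zero (n : ℕ) :
    (dens {A : Matrix (Fin n) (Fin n) F | A.det ≠ 0} : ℚ) =
      ∏ i : Fin n, (1 - (Fintype.card F : ℚ) ^ (i : ℕ) / Fintype.card F ^ n) := by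
  have card_GL : #{A : Matrix (Fin n) (Fin n) F | A.det ≠ 0} = Nat.card (GL (Fin n) F) := by
    rw [Nat.card_congr Submonoid.unitsTypeEquivIsUnitSubmonoid.toEquiv, Nat.subtype_card]
    intro A
    simp [IsUnit.mem_submonoid_iff, isUnit_iff_isUnit_det]
  have card_pow_ne_zero : (Fintype.card F : ℚ) ^ n ≠ 0 := by simp
  calc (dens {A : Matrix (Fin n) (Fin n) F | A.det ≠ 0} : ℚ)
    _ = (∏ i : Fin n, (Fintype.card F ^ n - Fintype.card F ^ (i : ℕ)) : ℕ) /
          ∏ _i : Fin n, (Fintype.card F : ℚ) ^ n := by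
      rw [nnratCast_dens, card_GL, card_GL_field]
      rw [← Fintype.card_congr (Matrix.of (m := Fin n) (n := Fin n) (α := F))]
      simp
    _ = ∏ i : Fin n, (1 - (Fintype.card F : ℚ) ^ (i : ℕ) / Fintype.card F ^ n) := by
      rw [Nat.cast_prod, ← prod_div_distrib]
      refine prod_congr rfl fun i _ => ?_
      rw [Nat.cast_sub (Nat.pow_le_pow_right Fintype.card_pos i.is_lt.le)]
      push_cast
      rw [sub_div, div_self card_pow_ne_zero]

theorem dens_det_ne_zero_le (m : ℕ) :
    (dens {A : Matrix (Fin (m + 2)) (Fin (m + 2)) F | A.det ≠ 0} : ℚ) ≤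
      (1 - 1 / (Fintype.card F : ℚ)) * (1 - 1 / Fintype.card F ^ 2) := by
  have one_le_card : (1 : ℚ) ≤ Fintype.card F := Nat.one_le_cast.mpr Fintype.card_pos
  have factor_nonneg (i : Fin (m + 2)) :
      0 ≤ 1 - (Fintype.card F : ℚ) ^ (i : ℕ) / Fintype.card F ^ (m + 2) :=
    sub_nonneg.mpr <| div_le_one_of_le₀ (pow_le_pow_right₀ one_le_card i.is_lt.le) (by positivity)
  calc (dens {A : Matrix (Fin (m + 2)) (Fin (m + 2)) F | A.det ≠ 0} : ℚ)
    _ ≤ ∏ i ∈ {Fin.last (m + 1), (Fin.last m).castSucc},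
          (1 - (Fintype.card F : ℚ) ^ (i : ℕ) / Fintype.card F ^ (m + 2)) := by
      rw [dens_det_ne_zero]
      exact prod_le_prod_of_subset_of_le_one (subset_univ _) (fun i _ => factor_nonneg i)
        fun i _ _ => sub_le_self _ (by positivity)
    _ = (1 - 1 / (Fintype.card F : ℚ)) * (1 - 1 / Fintype.card F ^ 2) := by
      rw [prod_pair (by simp [Fin.ext_iff]), Fin.val_last, Fin.val_castSucc, Fin.val_last]
      field

theorem one_div_card_add_le_dens_det_eq_zero (m : ℕ) :
    1 / q + 1 / q ^ 2 ≤
      dens {A : Matrix (Fin (m + 2)) (Fin (m + 2)) F | A.det = 0} + 1 / q ^ 3 := by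
  have dens_add_dens : (dens {A : Matrix (Fin (m + 2)) (Fin (m + 2)) F | A.det = 0} : ℚ) +
      dens {A : Matrix (Fin (m + 2)) (Fin (m + 2)) F | A.det ≠ 0} = 1 := by
    rw [← NNRat.cast_add, dens_filter_add_dens_filter_not_eq_dens, dens_univ, NNRat.cast_one]
  have dens_le := dens_det_ne_zero_le (F := F) m
  rw [← NNRat.cast_le (K := ℚ)]
  push_cast [-nnratCast_dens]
  linear_combination dens_add_dens.ge + dens_le

theorem dens_permanent_eq_zero_lt_dens_det_eq_zero {n : ℕ} (hn : 3 ≤ n) (h2 : (2 : F) ≠ 0)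
    (hF : 4 * n < Fintype.card F + 6) :
    dens {A : Matrix (Fin n) (Fin n) F | A.permanent = 0} <
      dens {A : Matrix (Fin n) (Fin n) F | A.det = 0} := by
  obtain ⟨m, rfl⟩ := Nat.exists_eq_add_of_le' (show 2 ≤ n by omega)
  have card_gt : (4 * m + 2 : ℚ≥0) < q := by exact_mod_cast show 4 * m + 2 < Fintype.card F by omega
  refine lt_of_add_lt_add_right (a := 1 / q ^ 3) ?_
  calc dens {A : Matrix (Fin (m + 2)) (Fin (m + 2)) F | A.permanent = 0} + 1 / q ^ 3
    _ ≤ (4 * m + 1) / q ^ 3 + 1 / q + 1 / q ^ 3 := by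
      gcongr
      exact dens_permanent_eq_zero_le h2 (by omega)
    _ = 1 / q + (4 * m + 2) / q ^ 3 := by ring
    _ < 1 / q + q / q ^ 3 := by gcongr
    _ = 1 / q + 1 / q ^ 2 := by field
    _ ≤ _ := one_div_card_add_le_dens_det_eq_zero m

end Density

theorem no_bijective_permanent_to_determinant_converter_general {F : Type*} [Field F] [Fintype F]
    {n : ℕ} (hn : 3 ≤ n) (hF : 4 * n < Fintype.card F + 6) (h2 : ringChar F ≠ 2) :
    ¬ ∃ Φ : Matrix (Fin n) (Fin n) F → Matrix (Fin n) (Fin n) F,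
        Φ.Surjective ∧ ∀ A, (Φ A).det = 0 → A.permanent = 0 := by
  classical
  rintro ⟨Φ, hΦ, h⟩
  refine (dens_permanent_eq_zero_lt_dens_det_eq_zero hn (Ring.two_ne_zero h2) hF).not_ge ?_
  rw [← dens_image hΦ.bijective_of_finite {A | A.permanent = 0}]
  refine dens_le_dens fun A hA => ?_
  obtain ⟨A, rfl⟩ := hΦ A
  simp only [mem_filter_univ] at hA
  exact mem_image_of_mem Φ (mem_filter_univ _ |>.mpr (h A hA))

/-- **Polya permanent problem over finite fields.**
For `n ≥ 3` there is a bound `q₀` (depending on `n`) such that for every finite field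
`F` with at least `q₀` elements and characteristic different from `2`, no bijective map
`Φ : Mₙ(F) → Mₙ(F)` satisfies `per A = det (Φ A)` for all `A`. -/
theorem no_bijective_permanent_to_determinant_converter (n : ℕ) (hn : 3 ≤ n) :
    ∃ q₀ : ℕ, ∀ (F : Type) [Field F] [Fintype F],
      q₀ ≤ Fintype.card F → ringChar F ≠ 2 →
      ¬ ∃ Φ : Matrix (Fin n) (Fin n) F → Matrix (Fin n) (Fin n) F,
          Function.Bijective Φ ∧ ∀ A, A.permanent = (Φ A).det := by
  refine ⟨4 * n, fun F _ _ hF hchar ⟨Φ, hΦ, h⟩ => ?_⟩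
  exact no_bijective_permanent_to_determinant_converter_general hn (by omega) hchar
    ⟨Φ, hΦ.surjective, fun A hA => (h A).trans hA⟩
end

section
/- Let n ≥ 3. There exists a bound q₀ (depending on n) such that for every finite ring R without zero divisors with |R| ≥ q₀ and char R ≠ 2, there is no bijective map Φ : M_n(R) → M_n(R) satisfying per A = det Φ(A) for all A ∈ M_n(R). -/
/-- The permanent of a square matrix over a (not necessarily commutative) ring:
`per A = Σ_{σ ∈ Sₙ} a_{1 σ(1)} ⋯ a_{n σ(n)}`, the product taken in row order. -/
def Matrix.ncPermanent {n : ℕ} {R : Type*} [Ring R]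
    (A : Matrix (Fin n) (Fin n) R) : R :=
  ∑ σ : Equiv.Perm (Fin n), ((List.finRange n).map (fun i => A i (σ i))).prod

/-- The determinant of a square matrix over a (not necessarily commutative) ring:
`det A = Σ_{σ ∈ Sₙ} sgn(σ) a_{1 σ(1)} ⋯ a_{n σ(n)}`, the product taken in row order. -/
def Matrix.ncDet {n : ℕ} {R : Type*} [Ring R]
    (A : Matrix (Fin n) (Fin n) R) : R :=
  ∑ σ : Equiv.Perm (Fin n),
    ((Equiv.Perm.sign σ : ℤ)) • ((List.finRange n).map (fun i => A i (σ i))).prod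

/-!
By Wedderburn's theorem the ring is a field; let `q` be its number of elements. Build a matrix row
by row, each new row on top of those already chosen. If `m` rows in `N` columns have a nonzero
maximal subpermanent, the rows which destroy this property when put on top form a vector space of
dimension at most `m`, just as for linear independence. So there are at least
`(q ^ N - 1) (q ^ N - q) ⋯ (q ^ N - q ^ (m - 1))` such matrices with `m` rows, which is the number
of matrices with linearly independent rows. When `q` is odd and `N ≥ 3` the bound is not attained
for `m = 2`, since only the zero row is bad for `(1, …, 1)`, and hence for no `m ≥ 2` with
`m ≤ N`. For `m = N = n` this says that the permanent takes nonzero values more often than the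
determinant.
-/

open Matrix

section Laplace

variable {R : Type*} [CommSemiring R]

theorem permanent_succ_column_zero {n : ℕ} (A : Matrix (Fin (n + 1)) (Fin (n + 1)) R) :
    A.permanent = ∑ i, A i 0 * (A.submatrix i.succAbove Fin.succ).permanent := by
  have permanent_swap (i : Fin (n + 1)) :
      (A.submatrix (fun k ↦ Equiv.swap 0 i k.succ) Fin.succ).permanent =
        (A.submatrix i.succAbove Fin.succ).permanent := by
    cases i using Fin.cases with
    | zero => simp
    | succ i =>
      simp only [← Fin.succAbove_cycleRange]
      exact permanent_permute_cols i.cycleRange (A.submatrix i.succ.succAbove Fin.succ)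
  rw [permanent, ← Equiv.Perm.decomposeFin.symm.sum_comp, Fintype.sum_prod_type]
  simp_rw [← permanent_swap]
  simp [permanent, Fin.prod_univ_succ, Finset.mul_sum]

theorem permanent_succ_row_zero {n : ℕ} (A : Matrix (Fin (n + 1)) (Fin (n + 1)) R) :
    A.permanent = ∑ j, A 0 j * (A.submatrix Fin.succ j.succAbove).permanent := by
  rw [← permanent_transpose, permanent_succ_column_zero]
  simp [← transpose_submatrix]

theorem permanent_submatrix_vecCons {m : ℕ} {ι : Type*} (x : ι → R) (C : Matrix (Fin m) ι R)
    (e : Fin (m + 1) → ι) :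
    ((of (vecCons x C)).submatrix id e).permanent =
      ∑ j, x (e j) * (C.submatrix id (e ∘ j.succAbove)).permanent := by
  rw [permanent_succ_row_zero]
  rfl

end Laplace

section NoncommutativeFormulas

variable {R : Type*} [CommRing R] {n : ℕ}

theorem ncPermanent_eq_permanent (A : Matrix (Fin n) (Fin n) R) :
    A.ncPermanent = A.permanent := by
  rw [← permanent_transpose]
  simp [permanent, ncPermanent, Fin.prod_univ_def]

theorem ncDet_eq_det (A : Matrix (Fin n) (Fin n) R) : A.ncDet = A.det := by
  rw [← det_transpose]
  simp [det_apply, ncDet, Fin.prod_univ_def, Units.smul_def]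

end NoncommutativeFormulas

/-- A matrix with `m` rows has full permanent rank if one of its `m × m` submatrices has nonzero
permanent; for determinants this would mean that the rows are linearly independent. The columns of
the submatrix are chosen by an embedding, hence up to order, which does not affect permanents. -/
def HasFullPermanentRank {m : ℕ} {ι R : Type*} [CommSemiring R] (B : Matrix (Fin m) ι R) : Prop :=
  ∃ e : Fin m ↪ ι, (B.submatrix id e).permanent ≠ 0

theorem hasFullPermanentRank_iff_permanent_ne_zero {n : ℕ} {R : Type*} [CommSemiring R]
    (A : Matrix (Fin n) (Fin n) R) : HasFullPermanentRank A ↔ A.permanent ≠ 0 := by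
  refine ⟨fun ⟨e, he⟩ ↦ ?_, fun hA ↦ ⟨.refl _, hA⟩⟩
  rwa [← permanent_permute_rows e.equivOfFiniteSelfEmbedding]

section RowExtension

variable {m : ℕ} {ι R : Type*} [CommRing R]

theorem not_hasFullPermanentRank_vecCons_sub {C : Matrix (Fin m) ι R} {x y : ι → R}
    (hx : ¬HasFullPermanentRank (of (vecCons x C)))
    (hy : ¬HasFullPermanentRank (of (vecCons y C))) :
    ¬HasFullPermanentRank (of (vecCons (x - y) C)) := by
  simp only [HasFullPermanentRank, not_exists, not_not, permanent_submatrix_vecCons] at hx hy ⊢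
  simp [sub_mul, hx, hy]

variable [NoZeroDivisors R]

theorem eq_zero_of_not_hasFullPermanentRank_vecCons {C : Matrix (Fin m) ι R} {e : Fin m ↪ ι}
    (he : (C.submatrix id e).permanent ≠ 0) {x : ι → R}
    (hx : ¬HasFullPermanentRank (of (vecCons x C))) (hxe : x ∘ e = 0) : x = 0 := by
  funext j
  by_cases hj : j ∈ Set.range e
  · obtain ⟨i, rfl⟩ := hj
    exact congrFun hxe i
  · have expansion : x j * (C.submatrix id e).permanent = 0 := by
      simp only [HasFullPermanentRank, not_exists, not_not, permanent_submatrix_vecCons] at hx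
      have hxe' (i : Fin m) : x (e i) = 0 := congrFun hxe i
      simpa [Fin.sum_univ_succ, Function.comp_def, hxe'] using hx (Fin.Embedding.cons e hj)
    exact (mul_eq_zero.mp expansion).resolve_right he

variable [Finite R]

theorem card_not_hasFullPermanentRank_vecCons_le {C : Matrix (Fin m) ι R}
    (hC : HasFullPermanentRank C) :
    Nat.card {x : ι → R // ¬HasFullPermanentRank (of (vecCons x C))} ≤ Nat.card R ^ m := by
  obtain ⟨e, he⟩ := hC
  have restrict_injective : Function.Injective
      fun x : {x : ι → R // ¬HasFullPermanentRank (of (vecCons x C))} ↦ x.1 ∘ e := by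
    intro x y hxy
    have hsub := not_hasFullPermanentRank_vecCons_sub x.2 y.2
    exact Subtype.ext <| sub_eq_zero.mp <| eq_zero_of_not_hasFullPermanentRank_vecCons he hsub <|
      sub_eq_zero.mpr hxy
  simpa [Nat.card_fun] using Nat.card_le_card_of_injective _ restrict_injective

theorem pow_sub_pow_le_card_hasFullPermanentRank_vecCons [Finite ι] {C : Matrix (Fin m) ι R}
    (hC : HasFullPermanentRank C) :
    Nat.card R ^ Nat.card ι - Nat.card R ^ m ≤
      Nat.card {x : ι → R // HasFullPermanentRank (of (vecCons x C))} := by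
  have card_rows :=
    Set.ncard_add_ncard_compl {x : ι → R | HasFullPermanentRank (of (vecCons x C))}
  have card_bad := card_not_hasFullPermanentRank_vecCons_le hC
  rw [Nat.card_fun] at card_rows
  rw [tsub_le_iff_right, ← card_rows]
  exact Nat.add_le_add_left card_bad _

end RowExtension

section Counting

variable {ι R : Type*} [CommRing R] [Finite R] [Finite ι]

theorem sum_card_hasFullPermanentRank_vecCons_le (m : ℕ)
    [Fintype {C : Matrix (Fin m) ι R // HasFullPermanentRank C}] :
    ∑ C : {C : Matrix (Fin m) ι R // HasFullPermanentRank C},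
        Nat.card {x : ι → R // HasFullPermanentRank (of (vecCons x C.1))} ≤
      Nat.card {B : Matrix (Fin (m + 1)) ι R // HasFullPermanentRank B} := by
  rw [← Nat.card_sigma]
  refine Nat.card_le_card_of_injective (fun p ↦ ⟨of (vecCons p.2.1 p.1.1), p.2.2⟩) ?_
  rintro ⟨⟨C, _⟩, ⟨x, _⟩⟩ ⟨⟨D, _⟩, ⟨y, _⟩⟩ h
  obtain ⟨rfl, rfl⟩ : x = y ∧ C = D := vecCons_inj.mp (congrArg Subtype.val h)
  rfl

variable [NoZeroDivisors R]

variable (ι R) in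
theorem card_hasFullPermanentRank_mul_le_succ (m : ℕ) :
    Nat.card {C : Matrix (Fin m) ι R // HasFullPermanentRank C} *
        (Nat.card R ^ Nat.card ι - Nat.card R ^ m) ≤
      Nat.card {B : Matrix (Fin (m + 1)) ι R // HasFullPermanentRank B} := by
  have := Fintype.ofFinite {C : Matrix (Fin m) ι R // HasFullPermanentRank C}
  refine le_trans ?_ (sum_card_hasFullPermanentRank_vecCons_le m)
  rw [Nat.card_eq_fintype_card, ← smul_eq_mul]
  exact Finset.card_nsmul_le_sum _ _ _ fun C _ ↦
    pow_sub_pow_le_card_hasFullPermanentRank_vecCons C.2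

end Counting

section OneRow

variable {ι R : Type*}

theorem hasFullPermanentRank_one_row_iff [CommSemiring R] (B : Matrix (Fin 1) ι R) :
    HasFullPermanentRank B ↔ B ≠ 0 := by
  constructor
  · rintro ⟨e, he⟩ rfl
    simp at he
  · intro hB
    obtain ⟨i, j, hij⟩ : ∃ i j, B i j ≠ 0 := by
      by_contra! h
      exact hB (ext h)
    rw [Subsingleton.elim i 0] at hij
    exact ⟨⟨fun _ ↦ j, Function.injective_of_subsingleton _⟩, by simpa using hij⟩

theorem card_hasFullPermanentRank_one_row [CommSemiring R] [Finite R] [Finite ι] :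
    Nat.card {B : Matrix (Fin 1) ι R // HasFullPermanentRank B} =
      Nat.card R ^ Nat.card ι - 1 := by
  have card_matrix : Nat.card (Matrix (Fin 1) ι R) = Nat.card R ^ Nat.card ι := by
    simp [Matrix, Nat.card_fun]
  simp_rw [hasFullPermanentRank_one_row_iff]
  rw [← card_matrix]
  exact Set.ncard_compl {(0 : Matrix (Fin 1) ι R)} |>.trans (by simp)

end OneRow

section OddCharacteristic

variable {ι R : Type*} [CommRing R] [NoZeroDivisors R]

theorem eq_zero_of_not_hasFullPermanentRank_vecCons_replicateRow_one (h2 : (2 : R) ≠ 0)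
    (hι : 3 ≤ ENat.card ι) {x : ι → R}
    (hx : ¬HasFullPermanentRank (of (vecCons x (replicateRow (Fin 1) (1 : ι → R))))) : x = 0 := by
  have add_eq_zero_of_ne {j k : ι} (hjk : j ≠ k) : x j + x k = 0 := by
    simp only [HasFullPermanentRank, not_exists, not_not, permanent_submatrix_vecCons] at hx
    simpa using hx ⟨![j, k], injective_pair_iff_ne.mpr hjk⟩
  funext j
  obtain ⟨k, hkj, -⟩ := ENat.exists_ne_ne_of_three_le hι j j
  obtain ⟨l, hlj, hlk⟩ := ENat.exists_ne_ne_of_three_le hι j k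
  have two_mul_eq_zero : 2 * x j = 0 := by
    linear_combination add_eq_zero_of_ne hkj + add_eq_zero_of_ne hlj - add_eq_zero_of_ne hlk
  exact (mul_eq_zero.mp two_mul_eq_zero).resolve_left h2

variable [Finite R]

theorem pow_sub_one_le_card_hasFullPermanentRank_vecCons_replicateRow_one (h2 : (2 : R) ≠ 0)
    (hι : 3 ≤ Nat.card ι) :
    Nat.card R ^ Nat.card ι - 1 ≤ Nat.card
      {x : ι → R // HasFullPermanentRank (of (vecCons x (replicateRow (Fin 1) (1 : ι → R))))} := by
  have := Nat.finite_of_card_ne_zero (α := ι) (by omega)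
  have card_ne_zero : Nat.card R ^ Nat.card ι - 1 = Nat.card {x : ι → R // x ≠ 0} := by
    rw [← Nat.card_fun]
    exact (Set.ncard_compl {(0 : ι → R)} |>.trans (by simp)).symm
  have three_le_card : 3 ≤ ENat.card ι := by
    rw [ENat.card_eq_coe_natCard]
    exact_mod_cast hι
  rw [card_ne_zero]
  exact Nat.card_mono (Set.toFinite _) fun x hx ↦ not_imp_comm.mp
    (eq_zero_of_not_hasFullPermanentRank_vecCons_replicateRow_one h2 three_le_card) hx

theorem mul_lt_card_hasFullPermanentRank_two_rows (h2 : (2 : R) ≠ 0) (hι : 3 ≤ Nat.card ι) :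
    (Nat.card R ^ Nat.card ι - 1) * (Nat.card R ^ Nat.card ι - Nat.card R) <
      Nat.card {B : Matrix (Fin 2) ι R // HasFullPermanentRank B} := by
  have := Nat.finite_of_card_ne_zero (α := ι) (by omega)
  have := Fintype.ofFinite {C : Matrix (Fin 1) ι R // HasFullPermanentRank C}
  have : Nontrivial R := ⟨2, 0, h2⟩
  have : Nonempty ι := Nat.card_pos_iff.mp (by omega) |>.1
  refine lt_of_lt_of_le ?_ (sum_card_hasFullPermanentRank_vecCons_le 1)
  rw [← card_hasFullPermanentRank_one_row, Nat.card_eq_fintype_card, ← smul_eq_mul,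
    ← Finset.card_univ, ← Finset.sum_const]
  have ones_full : HasFullPermanentRank (replicateRow (Fin 1) (1 : ι → R)) := by
    rw [hasFullPermanentRank_one_row_iff]
    exact fun h ↦ one_ne_zero (congrFun₂ h 0 (Classical.arbitrary ι))
  refine Finset.sum_lt_sum (fun C _ ↦ ?_) ⟨⟨_, ones_full⟩, Finset.mem_univ _, ?_⟩
  · simpa using pow_sub_pow_le_card_hasFullPermanentRank_vecCons C.2
  · have one_lt_card : 1 < Nat.card R := Finite.one_lt_card
    have card_le_pow : Nat.card R ≤ Nat.card R ^ Nat.card ι := Nat.le_self_pow (by omega) _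
    calc Nat.card R ^ Nat.card ι - Nat.card R
      _ < Nat.card R ^ Nat.card ι - 1 :=
        Nat.sub_lt_sub_left (one_lt_card.trans_le card_le_pow) one_lt_card
      _ ≤ _ := pow_sub_one_le_card_hasFullPermanentRank_vecCons_replicateRow_one h2 hι

theorem prod_lt_card_hasFullPermanentRank (h2 : (2 : R) ≠ 0) (hι : 3 ≤ Nat.card ι) {m : ℕ}
    (hm : 2 ≤ m) (hmι : m ≤ Nat.card ι) :
    ∏ i : Fin m, (Nat.card R ^ Nat.card ι - Nat.card R ^ (i : ℕ)) <
      Nat.card {B : Matrix (Fin m) ι R // HasFullPermanentRank B} := by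
  have := Nat.finite_of_card_ne_zero (α := ι) (by omega)
  have : Nontrivial R := ⟨2, 0, h2⟩
  induction m, hm using Nat.le_induction with
  | base => simpa [Fin.prod_univ_two] using mul_lt_card_hasFullPermanentRank_two_rows h2 hι
  | succ m _ ih =>
    have factor_pos : 0 < Nat.card R ^ Nat.card ι - Nat.card R ^ m :=
      Nat.sub_pos_of_lt (Nat.pow_lt_pow_right Finite.one_lt_card hmι)
    rw [Fin.prod_univ_castSucc]
    exact (Nat.mul_lt_mul_of_pos_right (ih (by omega)) factor_pos).trans_le
      (card_hasFullPermanentRank_mul_le_succ ι R m)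

end OddCharacteristic

theorem card_det_ne_zero {F : Type*} [Field F] [Finite F] (n : ℕ) :
    Nat.card {A : Matrix (Fin n) (Fin n) F // A.det ≠ 0} =
      ∏ i : Fin n, (Nat.card F ^ n - Nat.card F ^ (i : ℕ)) := by
  have := Fintype.ofFinite F
  have det_ne_zero_iff (A : Matrix (Fin n) (Fin n) F) :
      A.det ≠ 0 ↔ LinearIndependent F A.row := by
    rw [linearIndependent_rows_iff_isUnit, isUnit_iff_isUnit_det, isUnit_iff_ne_zero]
  simp_rw [det_ne_zero_iff]
  rw [Nat.card_eq_fintype_card (α := F)]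
  exact (card_linearIndependent (K := F) (V := Fin n → F) (k := n) (by simp)).trans (by simp)

theorem card_det_ne_zero_lt_card_permanent_ne_zero {F : Type*} [Field F] [Finite F]
    (h2 : (2 : F) ≠ 0) {n : ℕ} (hn : 3 ≤ n) :
    Nat.card {A : Matrix (Fin n) (Fin n) F // A.det ≠ 0} <
      Nat.card {A : Matrix (Fin n) (Fin n) F // A.permanent ≠ 0} := by
  simpa [card_det_ne_zero, hasFullPermanentRank_iff_permanent_ne_zero] using
    prod_lt_card_hasFullPermanentRank (ι := Fin n) h2 (by simpa) (by omega : 2 ≤ n) (by simp)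

theorem no_bijective_permanent_to_determinant_converter_ring_general {n : ℕ} (hn : 3 ≤ n)
    (R : Type*) [Ring R] [IsDomain R] [Finite R] (hR : ringChar R ≠ 2) :
    ¬ ∃ Φ : Matrix (Fin n) (Fin n) R → Matrix (Fin n) (Fin n) R,
        Function.Bijective Φ ∧ ∀ A, A.ncPermanent = (Φ A).ncDet := by
  rintro ⟨Φ, hΦ, per_eq_det⟩
  let : Field R := (Finite.isDomain_to_isField R).toField
  refine (card_det_ne_zero_lt_card_permanent_ne_zero (Ring.two_ne_zero hR) hn).ne' ?_
  refine Nat.card_congr ((Equiv.ofBijective Φ hΦ).subtypeEquiv fun A ↦ ?_)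
  simp [← ncPermanent_eq_permanent, ← ncDet_eq_det, per_eq_det]

/-- For `n ≥ 3` there is a bound `q₀` (depending on `n`) such that for every finite ring
`R` without zero divisors, with at least `q₀` elements and characteristic different
from `2`, no bijective map `Φ : Mₙ(R) → Mₙ(R)` satisfies `per A = det (Φ A)` for all `A`. -/
theorem no_bijective_permanent_to_determinant_converter_ring (n : ℕ) (hn : 3 ≤ n) :
    ∃ q₀ : ℕ, ∀ (R : Type) [Ring R] [NoZeroDivisors R] [Fintype R],
      q₀ ≤ Fintype.card R → ringChar R ≠ 2 →
      ¬ ∃ Φ : Matrix (Fin n) (Fin n) R → Matrix (Fin n) (Fin n) R,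
          Function.Bijective Φ ∧ ∀ A, A.ncPermanent = (Φ A).ncDet := by
  refine ⟨2, fun R _ _ _ hcard hchar ↦ ?_⟩
  have : Nontrivial R := Fintype.one_lt_card_iff_nontrivial.mp hcard
  have : IsDomain R := NoZeroDivisors.to_isDomain R
  exact no_bijective_permanent_to_determinant_converter_ring_general hn R hchar
end

section
/- Let F be a finite field with |F| = q > 3 and char F ≠ 2. Then for every n ≥ 1, 𝔏_n(q) ≤ |P_n(F)| ≤ 𝔘_n(q), where 𝔏_n and 𝔘_n are the recursively defined bounding functions. -/
/-- `v q k r = q^{2(k−r)}((qʳ − 1) q^{r−1} + qʳ)`, the number of pairs `(x,y) ∈ Fᵏ × Fᵏ`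
with `xᵀ A y = 0` for a rank-`r` matrix `A` over a field with `q` elements. -/
def vAux (q : ℤ) (k r : ℕ) : ℤ :=
  q ^ (2 * (k - r)) * ((q ^ r - 1) * q ^ (r - 1) + q ^ r)

/-!
Expand the permanent of an `n × n` matrix along its first row and column, over the complementary
block `B`. If `per B ≠ 0`, the corner entry is determined by the others. If `per B = 0`, the
permanent is the bilinear form of the matrix of permanental minors of `B`, evaluated at the first
column and row, and its number of zeros depends only on the rank `r` of that form, decreasingly. So
`|Pₙ|` is determined by the distribution of `r` over `Pₙ₋₁`, and bounding the numbers of `B` with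
`r = 0` and `r = 1` bounds `|Pₙ|`.

For `r = 0`, take a largest square submatrix of `B` with nonzero permanent. For `r = 1`, all `2 × 2`
minors of the form vanish; as `per B = 0`, the vanishing of the leading one is a condition of degree
at most two in each entry of `B` and free of the corner entry. In characteristic other than two the
condition fails somewhere, hence at many matrices, as one sees by varying one entry at a time. This
settles the `B` whose own complementary block has nonzero permanent, so that the corner entry is
redundant; the others are counted by the bilinear form of that block.
-/

namespace PermanentCount

open Finset Matrix

section Permanent

variable {R : Type*} [CommSemiring R] {n : ℕ}

theorem permanent_succ_column_zero (A : Matrix (Fin (n + 1)) (Fin (n + 1)) R) :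
    A.permanent = ∑ i, A i 0 * (A.submatrix i.succAbove Fin.succ).permanent := by
  rw [permanent, univ_perm_fin_succ, ← univ_product_univ]
  simp only [sum_map, Equiv.toEmbedding_apply, sum_product]
  refine sum_congr rfl fun i _ => ?_
  cases i using Fin.cases with
  | zero => simp [permanent, Fin.prod_univ_succ, mul_sum]
  | succ i =>
    rw [← permanent_permute_cols i.cycleRange, permanent, mul_sum]
    refine sum_congr rfl fun σ _ => ?_
    simp [Fin.prod_univ_succ, Fin.succAbove_cycleRange]

theorem permanent_succ_row_zero (A : Matrix (Fin (n + 1)) (Fin (n + 1)) R) :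
    A.permanent = ∑ j, A 0 j * (A.submatrix Fin.succ j.succAbove).permanent := by
  rw [← permanent_transpose, permanent_succ_column_zero]
  refine sum_congr rfl fun j _ => ?_
  rw [← permanent_transpose, transpose_submatrix, transpose_transpose, transpose_apply]

theorem permanent_eq_zero_of_row_eq_zero {ι : Type*} [Fintype ι] [DecidableEq ι]
    {A : Matrix ι ι R} (i : ι) (hA : ∀ j, A i j = 0) : A.permanent = 0 := by
  rw [← permanent_transpose, permanent]
  exact sum_eq_zero fun σ _ => prod_eq_zero (mem_univ i) (hA _)

theorem map_permanent {S ι : Type*} [CommSemiring S] [Fintype ι] [DecidableEq ι] (φ : R →+* S)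
    (A : Matrix ι ι R) : φ A.permanent = (A.map φ).permanent := by
  simp [permanent, map_sum, map_prod]

theorem exists_perm_comp_eq {α β : Type*} {f g : α → β} (hf : f.Injective) (hg : g.Injective)
    (h : Set.range f = Set.range g) : ∃ σ : Equiv.Perm α, f ∘ σ = g := by
  refine ⟨(Equiv.ofInjective g hg).trans ((Equiv.setCongr h.symm).trans
    (Equiv.ofInjective f hf).symm), ?_⟩
  ext a
  simp [Equiv.apply_ofInjective_symm]

theorem permanent_submatrix_congr {ι α β : Type*} [Fintype ι] [DecidableEq ι] (A : Matrix α β R)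
    {f f' : ι ↪ α} {g g' : ι ↪ β} (hf : Set.range f = Set.range f')
    (hg : Set.range g = Set.range g') :
    (A.submatrix f g).permanent = (A.submatrix f' g').permanent := by
  obtain ⟨σ, hσ⟩ := exists_perm_comp_eq f.injective f'.injective hf
  obtain ⟨τ, hτ⟩ := exists_perm_comp_eq g.injective g'.injective hg
  rw [← permanent_permute_cols σ (A.submatrix f g),
    ← permanent_permute_rows τ ((A.submatrix f g).submatrix σ id), ← hσ, ← hτ]
  rfl

/-- The block matrix `!![a, x; y, B]` with corner `a`, first row `x` and first column `y`; the
permanents of its minors are recovered from those of `B`. -/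
def bordered {S : Type*} (a : S) (x y : Fin n → S) (B : Matrix (Fin n) (Fin n) S) :
    Matrix (Fin (n + 1)) (Fin (n + 1)) S :=
  of (Fin.cons (Fin.cons a x) fun i => Fin.cons (y i) (B i))

section

variable {S : Type*} (a : S) (x y : Fin n → S) (B : Matrix (Fin n) (Fin n) S)

@[simp] theorem bordered_zero_zero : bordered a x y B 0 0 = a := rfl

@[simp] theorem bordered_zero_succ (j : Fin n) : bordered a x y B 0 j.succ = x j := rfl

@[simp] theorem bordered_succ_zero (i : Fin n) : bordered a x y B i.succ 0 = y i := rfl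

@[simp] theorem bordered_succ_succ (i j : Fin n) : bordered a x y B i.succ j.succ = B i j := rfl

end

/-- Decomposition of a square matrix into its lower right block, the rest of its first row and of
its first column, and its corner. -/
@[simps]
def borderedEquiv (S : Type*) (n : ℕ) :
    (Matrix (Fin n) (Fin n) S × (Fin n → S) × (Fin n → S)) × S ≃
      Matrix (Fin (n + 1)) (Fin (n + 1)) S where
  toFun p := bordered p.2 p.1.2.1 p.1.2.2 p.1.1
  invFun A := ((A.submatrix Fin.succ Fin.succ, fun j => A 0 j.succ, fun i => A i.succ 0), A 0 0)
  left_inv _ := rfl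
  right_inv A := by
    ext i j
    cases i using Fin.cases <;> cases j using Fin.cases <;> rfl

theorem permanent_bordered (a : R) (x y : Fin n → R) (B : Matrix (Fin n) (Fin n) R) :
    (bordered a x y B).permanent = a * B.permanent + (bordered 0 x y B).permanent := by
  rw [permanent_succ_row_zero, permanent_succ_row_zero (bordered 0 x y B)]
  simp only [Fin.sum_univ_succ, bordered_zero_zero, bordered_zero_succ, zero_mul, zero_add]
  rfl

/-- The matrix of complementary permanental minors: the permanental analogue of the adjugate, but
not transposed. -/
def permanentMinors (A : Matrix (Fin (n + 1)) (Fin (n + 1)) R) :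
    Matrix (Fin (n + 1)) (Fin (n + 1)) R :=
  of fun i j => (A.submatrix i.succAbove j.succAbove).permanent

theorem permanentMinors_apply (A : Matrix (Fin (n + 1)) (Fin (n + 1)) R) (i j : Fin (n + 1)) :
    permanentMinors A i j = (A.submatrix i.succAbove j.succAbove).permanent := rfl

theorem permanent_bordered_zero (x y : Fin (n + 1) → R)
    (B : Matrix (Fin (n + 1)) (Fin (n + 1)) R) :
    (bordered 0 x y B).permanent = y ⬝ᵥ permanentMinors B *ᵥ x := by
  rw [permanent_succ_row_zero, Fin.sum_univ_succ, bordered_zero_zero, zero_mul, zero_add]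
  simp only [bordered_zero_succ, dotProduct, mulVec, mul_sum, permanentMinors_apply]
  rw [sum_comm]
  refine sum_congr rfl fun j _ => ?_
  rw [permanent_succ_column_zero, mul_sum]
  refine sum_congr rfl fun i _ => ?_
  have h_minor : ((bordered 0 x y B).submatrix Fin.succ j.succ.succAbove).submatrix
      i.succAbove Fin.succ = B.submatrix i.succAbove j.succAbove := by
    ext k l
    simp
  simp only [h_minor, submatrix_apply, Fin.succ_succAbove_zero, bordered_succ_zero]
  ring

end Permanent

section PermRank

variable {R α β : Type*} [CommSemiring R]

/-- The permanental rank: the largest size of a square submatrix with nonzero permanent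
(junk value `0` if there is no largest one). -/
noncomputable def permRank (A : Matrix α β R) : ℕ :=
  sSup {k | ∃ (f : Fin k ↪ α) (g : Fin k ↪ β), (A.submatrix f g).permanent ≠ 0}

section

variable [Finite α]

theorem bddAbove_permanent_submatrix_ne_zero (A : Matrix α β R) :
    BddAbove {k | ∃ (f : Fin k ↪ α) (g : Fin k ↪ β), (A.submatrix f g).permanent ≠ 0} := by
  refine ⟨Nat.card α, ?_⟩
  rintro k ⟨f, -⟩
  simpa using Finite.card_le_of_embedding f

theorem le_permRank {A : Matrix α β R} {k : ℕ} {f : Fin k ↪ α} {g : Fin k ↪ β}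
    (h : (A.submatrix f g).permanent ≠ 0) : k ≤ permRank A :=
  le_csSup (bddAbove_permanent_submatrix_ne_zero A) ⟨f, g, h⟩

theorem exists_permanent_submatrix_ne_zero [Nontrivial R] (A : Matrix α β R) :
    ∃ (f : Fin (permRank A) ↪ α) (g : Fin (permRank A) ↪ β), (A.submatrix f g).permanent ≠ 0 := by
  refine Nat.sSup_mem ?_ (bddAbove_permanent_submatrix_ne_zero A)
  exact ⟨0, .ofIsEmpty, .ofIsEmpty, by simp [permanent_isEmpty]⟩

theorem exists_permanent_submatrix_ne_zero_of_le [Nontrivial R] {A : Matrix α β R} {k : ℕ}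
    (hk : k ≤ permRank A) :
    ∃ (f : Fin k ↪ α) (g : Fin k ↪ β), (A.submatrix f g).permanent ≠ 0 := by
  induction hk using Nat.decreasingInduction with
  | self => exact exists_permanent_submatrix_ne_zero A
  | of_succ k _ ih =>
    obtain ⟨f, g, h⟩ := ih
    rw [permanent_succ_row_zero] at h
    obtain ⟨j, -, hj⟩ := exists_ne_zero_of_sum_ne_zero h
    exact ⟨(Fin.succEmb k).trans f, j.succAboveEmb.trans g, right_ne_zero_of_mul hj⟩

end

theorem exists_orderEmbedding_permanent_submatrix_ne_zero [LinearOrder α] [LinearOrder β]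
    {A : Matrix α β R} {k : ℕ} {f : Fin k ↪ α} {g : Fin k ↪ β}
    (h : (A.submatrix f g).permanent ≠ 0) :
    ∃ (f : Fin k ↪o α) (g : Fin k ↪o β), (A.submatrix f g).permanent ≠ 0 := by
  have hf : #(univ.map f) = k := by simp
  have hg : #(univ.map g) = k := by simp
  refine ⟨(univ.map f).orderEmbOfFin hf, (univ.map g).orderEmbOfFin hg, ?_⟩
  rwa [permanent_submatrix_congr A (f' := ((univ.map f).orderEmbOfFin hf).toEmbedding)
    (g' := ((univ.map g).orderEmbOfFin hg).toEmbedding) (by simp) (by simp)] at h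

theorem exists_range_eq_range_succAbove {n : ℕ} (f : Fin n ↪ Fin (n + 1)) :
    ∃ i : Fin (n + 1), Set.range f = Set.range i.succAbove := by
  obtain ⟨i, hi⟩ : ∃ i, i ∉ Set.range f := by
    by_contra! h
    simpa using Fintype.card_le_of_surjective f h
  refine ⟨i, ?_⟩
  rw [Fin.range_succAbove]
  refine Set.eq_of_subset_of_ncard_le (fun k hk hki => hi (hki ▸ hk)) ?_
  rw [Set.ncard_compl, Set.ncard_range_of_injective f.injective]
  simp

theorem permRank_lt_of_permanentMinors_eq_zero [Nontrivial R] {n : ℕ}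
    {A : Matrix (Fin (n + 1)) (Fin (n + 1)) R} (hA : permanentMinors A = 0) : permRank A < n := by
  by_contra! h
  obtain ⟨f, g, hfg⟩ := exists_permanent_submatrix_ne_zero_of_le h
  obtain ⟨i, hi⟩ := exists_range_eq_range_succAbove f
  obtain ⟨j, hj⟩ := exists_range_eq_range_succAbove g
  apply hfg
  rw [permanent_submatrix_congr A (f' := i.succAboveEmb) (g' := j.succAboveEmb) hi hj]
  exact congr_fun₂ hA i j

end PermRank

section MinorCount

variable {α β : Type*} {m : ℕ}

theorem submatrix_cons_cons {S : Type*} (A : Matrix α β S) (f : Fin m → α) (g : Fin m → β)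
    (i : α) (j : β) :
    A.submatrix (Fin.cons i f : Fin (m + 1) → α) (Fin.cons j g : Fin (m + 1) → β) =
      bordered (A i j) (fun l => A i (g l)) (fun k => A (f k) j) (A.submatrix f g) := by
  ext k l
  cases k using Fin.cases <;> cases l using Fin.cases <;> rfl

theorem permanent_submatrix_cons_cons_eq_zero {R : Type*} [CommSemiring R] [Finite α]
    {A : Matrix α β R} (hA : permRank A ≤ m) {f : Fin m ↪ α} {g : Fin m ↪ β}
    {i : α} {j : β} (hi : i ∉ Set.range f) (hj : j ∉ Set.range g) :
    (A.submatrix (Fin.cons i f : Fin (m + 1) → α) (Fin.cons j g : Fin (m + 1) → β)).permanent =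
      0 := by
  by_contra h
  have h_le := le_permRank (f := ⟨_, Fin.cons_injective_iff.2 ⟨hi, f.injective⟩⟩)
    (g := ⟨_, Fin.cons_injective_iff.2 ⟨hj, g.injective⟩⟩) h
  omega

theorem eq_of_permRank_le {R : Type*} [CommRing R] [IsDomain R] [Finite α] {A B : Matrix α β R}
    (hA : permRank A ≤ m) (hB : permRank B ≤ m) {f : Fin m ↪ α} {g : Fin m ↪ β}
    (h_ne : (A.submatrix f g).permanent ≠ 0) (h_row : ∀ k j, A (f k) j = B (f k) j)
    (h_col : ∀ i l, A i (g l) = B i (g l)) : A = B := by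
  ext i j
  by_cases hi : i ∈ Set.range f
  · obtain ⟨k, rfl⟩ := hi
    exact h_row k j
  by_cases hj : j ∈ Set.range g
  · obtain ⟨l, rfl⟩ := hj
    exact h_col i l
  have h_minor : A.submatrix f g = B.submatrix f g := by
    ext k l
    exact h_row k (g l)
  have hA' := permanent_submatrix_cons_cons_eq_zero hA hi hj
  have hB' := permanent_submatrix_cons_cons_eq_zero hB hi hj
  rw [submatrix_cons_cons, permanent_bordered] at hA' hB'
  simp only [← h_row, ← h_col, ← h_minor] at hB'
  exact mul_right_cancel₀ h_ne (add_right_cancel (hA'.trans hB'.symm))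

variable [Fintype α]

theorem card_orderEmbedding_fin [LinearOrder α] :
    Fintype.card (Fin m ↪o α) = (Fintype.card α).choose m := by
  rw [← Nat.card_eq_fintype_card, Nat.card_congr Set.powersetCard.ofFinEmbEquiv,
    Set.powersetCard.card, Nat.card_eq_fintype_card]

theorem card_notMem_range (f : Fin m ↪ α) [Fintype {i // i ∉ Set.range f}] :
    Fintype.card {i // i ∉ Set.range f} = Fintype.card α - m := by
  classical
  rw [Fintype.card_subtype_compl, Set.card_range_of_injective f.injective, Fintype.card_fin]

variable [DecidableEq α] [Fintype β] [DecidableEq β]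

theorem card_matrix (S : Type*) [Fintype S] :
    Fintype.card (Matrix α β S) = Fintype.card S ^ (Fintype.card α * Fintype.card β) := by
  change Fintype.card (α → β → S) = _
  rw [Fintype.card_fun, Fintype.card_fun, ← pow_mul, mul_comm]

variable {F : Type*} [Field F] [Fintype F] [DecidableEq F]

theorem card_permRank_le_minor_ne_zero_le (f : Fin m ↪ α) (g : Fin m ↪ β) :
    #{A : Matrix α β F | permRank A ≤ m ∧ (A.submatrix f g).permanent ≠ 0} ≤
      Fintype.card F ^ (m * (Fintype.card α - m) + m * (Fintype.card β - m)) *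
        #{B : Matrix (Fin m) (Fin m) F | B.permanent ≠ 0} := by
  classical
  let rows (A : Matrix α β F) : Matrix (Fin m) {j // j ∉ Set.range g} F :=
    A.submatrix f Subtype.val
  let cols (A : Matrix α β F) : Matrix {i // i ∉ Set.range f} (Fin m) F :=
    A.submatrix Subtype.val g
  calc
    _ ≤ #((univ ×ˢ univ) ×ˢ ({B | B.permanent ≠ 0} : Finset (Matrix (Fin m) (Fin m) F))) := by
      refine card_le_card_of_injOn (fun A => ((rows A, cols A), A.submatrix f g)) (fun A hA => ?_)
        fun A hA B hB hAB => ?_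
      · simpa using (mem_filter.1 hA).2.2
      · obtain ⟨-, hA, h_ne⟩ := mem_filter.1 hA
        obtain ⟨-, hB, -⟩ := mem_filter.1 hB
        simp only [Prod.mk.injEq] at hAB
        obtain ⟨⟨h_rows, h_cols⟩, h_minor⟩ := hAB
        refine eq_of_permRank_le hA hB h_ne (fun k j => ?_) fun i l => ?_
        · by_cases hj : j ∈ Set.range g
          · obtain ⟨l, rfl⟩ := hj
            exact congr_fun₂ h_minor k l
          · exact congr_fun₂ h_rows k ⟨j, hj⟩
        · by_cases hi : i ∈ Set.range f
          · obtain ⟨k, rfl⟩ := hi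
            exact congr_fun₂ h_minor k l
          · exact congr_fun₂ h_cols ⟨i, hi⟩ l
    _ = _ := by
      rw [card_product, card_product, card_univ, card_univ, card_matrix, card_matrix, ← pow_add]
      simp only [card_notMem_range, Fintype.card_fin, mul_comm, add_comm]

theorem card_permRank_eq_le (n m : ℕ) :
    #{A : Matrix (Fin n) (Fin n) F | permRank A = m} ≤
      n.choose m ^ 2 * (Fintype.card F ^ (2 * m * (n - m)) *
        #{B : Matrix (Fin m) (Fin m) F | B.permanent ≠ 0}) := by
  classical
  calc
    _ ≤ #((univ : Finset ((Fin m ↪o Fin n) × (Fin m ↪o Fin n))).biUnion fun p =>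
        ({A | permRank A ≤ m ∧ (A.submatrix p.1 p.2).permanent ≠ 0} :
          Finset (Matrix (Fin n) (Fin n) F))) := by
      refine card_le_card fun A hA => ?_
      obtain rfl := (mem_filter.1 hA).2
      obtain ⟨f, g, h⟩ := exists_permanent_submatrix_ne_zero A
      obtain ⟨f, g, h⟩ := exists_orderEmbedding_permanent_submatrix_ne_zero h
      exact mem_biUnion.2 ⟨(f, g), mem_univ _, mem_filter.2 ⟨mem_univ _, le_rfl, h⟩⟩
    _ ≤ _ := card_biUnion_le_card_mul _ _ _ fun p _ =>
        card_permRank_le_minor_ne_zero_le p.1.toEmbedding p.2.toEmbedding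
    _ = _ := by
      rw [card_univ, Fintype.card_prod, card_orderEmbedding_fin, Fintype.card_fin]
      ring_nf

theorem card_permanentMinors_eq_zero_le (n : ℕ) :
    #{A : Matrix (Fin (n + 1)) (Fin (n + 1)) F | permanentMinors A = 0} ≤
      ∑ m ∈ range n, (n + 1).choose m ^ 2 * (Fintype.card F ^ (2 * m * (n + 1 - m)) *
        #{B : Matrix (Fin m) (Fin m) F | B.permanent ≠ 0}) := by
  classical
  calc
    _ ≤ #((range n).biUnion fun m =>
        ({A | permRank A = m} : Finset (Matrix (Fin (n + 1)) (Fin (n + 1)) F))) := by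
      refine card_le_card fun A hA => ?_
      have h_lt := permRank_lt_of_permanentMinors_eq_zero (mem_filter.1 hA).2
      exact mem_biUnion.2 ⟨_, mem_range.2 h_lt, mem_filter.2 ⟨mem_univ _, rfl⟩⟩
    _ ≤ _ := card_biUnion_le.trans (sum_le_sum fun m _ => card_permRank_eq_le (n + 1) m)

end MinorCount

section VAux

variable {q : ℤ} {k r : ℕ}

theorem mul_vAux (h : r ≤ k) :
    q * vAux q k r = q ^ (2 * k) + q ^ (k - r) * (q ^ k * (q - 1)) := by
  obtain ⟨s, rfl⟩ := Nat.exists_eq_add_of_le h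
  rw [vAux, Nat.add_sub_cancel_left]
  cases r with
  | zero =>
    simp only [pow_zero, sub_self, zero_mul, zero_add, mul_one]
    ring
  | succ r =>
    rw [Nat.add_sub_cancel]
    ring

theorem vAux_zero : vAux q k 0 = q ^ (2 * k) := by simp [vAux]

theorem vAux_nonneg (hq : 1 ≤ q) (k r : ℕ) : 0 ≤ vAux q k r := by
  have h : 0 ≤ q ^ r - 1 := sub_nonneg.2 (one_le_pow₀ hq)
  unfold vAux
  positivity

theorem vAux_le_vAux {s : ℕ} (hq : 1 ≤ q) (hrs : r ≤ s) (hs : s ≤ k) :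
    vAux q k s ≤ vAux q k r := by
  refine le_of_mul_le_mul_left ?_ (zero_lt_one.trans_le hq)
  rw [mul_vAux hs, mul_vAux (hrs.trans hs)]
  have : 0 ≤ q - 1 := sub_nonneg.2 hq
  gcongr

end VAux

section BilinearForms

variable {F ι : Type*} [Field F] [Fintype F] [DecidableEq F] [Fintype ι] [DecidableEq ι]

theorem card_mulVec_eq_zero {κ : Type*} [Fintype κ] (M : Matrix κ ι F) :
    #{x : ι → F | M *ᵥ x = 0} = Fintype.card F ^ (Fintype.card ι - M.rank) := by
  have h_rank : M.rank + Module.finrank F (LinearMap.ker M.mulVecLin) = Fintype.card ι := by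
    rw [Matrix.rank, LinearMap.finrank_range_add_finrank_ker, Module.finrank_fintype_fun_eq_card]
  have := Fintype.ofFinite (LinearMap.ker M.mulVecLin)
  rw [← h_rank, Nat.add_sub_cancel_left, ← Module.card_eq_pow_finrank (K := F)]
  exact (Fintype.card_of_subtype _ fun x => by simp).symm

theorem card_dotProduct_eq_zero {r : ι → F} (hr : r ≠ 0) :
    #{y : ι → F | y ⬝ᵥ r = 0} * Fintype.card F = Fintype.card F ^ Fintype.card ι := by
  let f : Module.Dual F (ι → F) := dotProductBilin F F r
  have hf : f ≠ 0 := by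
    obtain ⟨i, hi⟩ := Function.ne_iff.mp hr
    exact fun h => hi (by simpa [f] using LinearMap.congr_fun h (Pi.single i 1))
  have := Fintype.ofFinite (LinearMap.ker f)
  have h_card : #{y : ι → F | y ⬝ᵥ r = 0} = Fintype.card (LinearMap.ker f) :=
    (Fintype.card_of_subtype _ fun y => by simp [f, dotProduct_comm]).symm
  rw [h_card, Module.card_eq_pow_finrank (K := F), ← pow_succ,
    Module.Dual.finrank_ker_add_one_of_ne_zero hf, Module.finrank_fintype_fun_eq_card]

theorem card_dotProduct_mulVec_eq_zero (M : Matrix ι ι F) :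
    (#{p : (ι → F) × (ι → F) | p.2 ⬝ᵥ M *ᵥ p.1 = 0} : ℤ) =
      vAux (Fintype.card F) (Fintype.card ι) M.rank := by
  set q : ℤ := (Fintype.card F : ℤ)
  set k := Fintype.card ι
  have h_fiber (x : ι → F) : q * #{y : ι → F | y ⬝ᵥ M *ᵥ x = 0} =
      q ^ k + if M *ᵥ x = 0 then q ^ k * (q - 1) else 0 := by
    split_ifs with h
    · simp [h]
      ring
    · rw [add_zero, mul_comm]
      simp only [q, k]
      exact mod_cast card_dotProduct_eq_zero h
  have hq_ne : q ≠ 0 := by simp [q]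
  refine mul_left_cancel₀ hq_ne ?_
  calc q * (#{p : (ι → F) × (ι → F) | p.2 ⬝ᵥ M *ᵥ p.1 = 0} : ℤ)
      = ∑ x : ι → F, q * #{y : ι → F | y ⬝ᵥ M *ᵥ x = 0} := by
        simp only [card_filter, Fintype.sum_prod_type, Nat.cast_sum, mul_sum]
    _ = q ^ (2 * k) + #{x : ι → F | M *ᵥ x = 0} * (q ^ k * (q - 1)) := by
        simp only [h_fiber, sum_add_distrib, sum_const, card_univ, Fintype.card_fun, ← sum_filter,
          nsmul_eq_mul]
        push_cast
        rw [two_mul, pow_add]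
    _ = q * vAux q k M.rank := by
        rw [mul_vAux M.rank_le_card_width, card_mulVec_eq_zero]
        push_cast
        rfl

end BilinearForms

section Recursion

variable (F : Type*) [Field F] [Fintype F] [DecidableEq F]

/-- The set `Pₙ(F)` of square matrices of size `n` with vanishing permanent. -/
def permanentZeros (n : ℕ) : Finset (Matrix (Fin n) (Fin n) F) := {A | A.permanent = 0}

/-- The set of matrices in `Pₙ₊₁(F)` whose matrix of complementary permanental minors has rank `r`;
`𝔑⁽⁰⁾` and `𝔑⁽¹⁾` bound its size for `r = 0` and `r = 1`. -/
noncomputable def permanentZerosOfRank (n r : ℕ) : Finset (Matrix (Fin (n + 1)) (Fin (n + 1)) F) :=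
  {A ∈ permanentZeros F (n + 1) | (permanentMinors A).rank = r}

local notation "q" => (Fintype.card F : ℤ)

variable {F}

@[simp] theorem mem_permanentZeros {n : ℕ} {A : Matrix (Fin n) (Fin n) F} :
    A ∈ permanentZeros F n ↔ A.permanent = 0 := by simp [permanentZeros]

theorem card_permanent_ne_zero (n : ℕ) :
    (#{A : Matrix (Fin n) (Fin n) F | A.permanent ≠ 0} : ℤ) =
      q ^ n ^ 2 - #(permanentZeros F n) := by
  have h_add := card_filter_add_card_filter_not (s := univ)
    fun A : Matrix (Fin n) (Fin n) F => A.permanent = 0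
  rw [card_univ, card_matrix, Fintype.card_fin, ← sq] at h_add
  rw [eq_sub_iff_add_eq', permanentZeros]
  exact_mod_cast h_add

theorem card_permanentZeros_filter_minor (n : ℕ) (P : Matrix (Fin n) (Fin n) F → Prop)
    [DecidablePred P] :
    #{A ∈ permanentZeros F (n + 1) | P (A.submatrix Fin.succ Fin.succ)} =
      ∑ B with P B, #{p : ((Fin n → F) × (Fin n → F)) × F |
        (bordered p.2 p.1.1 p.1.2 B).permanent = 0} := by
  rw [permanentZeros, filter_filter, card_filter, ← (borderedEquiv F n).sum_comp,
    Fintype.sum_prod_type, Fintype.sum_prod_type, sum_filter]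
  refine sum_congr rfl fun B _ => ?_
  simp only [card_filter, Fintype.sum_prod_type]
  change ∑ x : Fin n → F, ∑ y : Fin n → F, ∑ a : F,
    (if (bordered a x y B).permanent = 0 ∧ P B then 1 else 0) = _
  split_ifs with hB <;> simp [hB]

theorem card_bordered_of_permanent_ne_zero {n : ℕ} {B : Matrix (Fin n) (Fin n) F}
    (hB : B.permanent ≠ 0) :
    #{p : ((Fin n → F) × (Fin n → F)) × F | (bordered p.2 p.1.1 p.1.2 B).permanent = 0} =
      Fintype.card F ^ (2 * n) := by
  calc
    _ = #(univ : Finset ((Fin n → F) × (Fin n → F))) := by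
      refine card_bij' (fun p _ => p.1)
        (fun v _ => (v, -(bordered 0 v.1 v.2 B).permanent / B.permanent)) (fun _ _ => mem_univ _)
        (fun v _ => ?_) (fun p hp => ?_) fun _ _ => rfl
      · refine mem_filter.2 ⟨mem_univ _, ?_⟩
        rw [permanent_bordered (_ / _), div_mul_cancel₀ _ hB, neg_add_cancel]
      · have h_zero := (mem_filter.1 hp).2
        rw [permanent_bordered] at h_zero
        rw [← eq_neg_of_add_eq_zero_left h_zero, mul_div_cancel_right₀ _ hB]
    _ = _ := by simp [two_mul, pow_add]

theorem card_bordered_of_permanent_eq_zero {n : ℕ} {B : Matrix (Fin (n + 1)) (Fin (n + 1)) F}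
    (hB : B.permanent = 0) :
    (#{p : ((Fin (n + 1) → F) × (Fin (n + 1) → F)) × F |
        (bordered p.2 p.1.1 p.1.2 B).permanent = 0} : ℤ) =
      q * vAux q (n + 1) (permanentMinors B).rank := by
  have h_prod : ({p | (bordered p.2 p.1.1 p.1.2 B).permanent = 0} :
      Finset (((Fin (n + 1) → F) × (Fin (n + 1) → F)) × F)) =
        ({v | v.2 ⬝ᵥ permanentMinors B *ᵥ v.1 = 0} :
          Finset ((Fin (n + 1) → F) × (Fin (n + 1) → F))) ×ˢ univ := by
    ext p
    simp [permanent_bordered p.2, hB, permanent_bordered_zero]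
  rw [h_prod, card_product, card_univ, Nat.cast_mul, card_dotProduct_mulVec_eq_zero,
    Fintype.card_fin, mul_comm]

theorem card_permanentZeros_minor_ne_zero (n : ℕ) :
    (#{A ∈ permanentZeros F (n + 1) | (A.submatrix Fin.succ Fin.succ).permanent ≠ 0} : ℤ) =
      (q ^ n ^ 2 - #(permanentZeros F n)) * q ^ (2 * n) := by
  rw [card_permanentZeros_filter_minor (F := F) n fun B => B.permanent ≠ 0,
    sum_congr rfl fun B hB => card_bordered_of_permanent_ne_zero (mem_filter.1 hB).2,
    sum_const, smul_eq_mul]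
  push_cast
  rw [card_permanent_ne_zero]

theorem card_permanentZeros_minor_eq_zero (n : ℕ) :
    (#{A ∈ permanentZeros F (n + 2) | (A.submatrix Fin.succ Fin.succ).permanent = 0} : ℤ) =
      q * ∑ B ∈ permanentZeros F (n + 1), vAux q (n + 1) (permanentMinors B).rank := by
  rw [card_permanentZeros_filter_minor (F := F) (n + 1) fun B => B.permanent = 0, Nat.cast_sum,
    sum_congr rfl fun B hB => card_bordered_of_permanent_eq_zero (mem_filter.1 hB).2, ← mul_sum]
  rfl

theorem card_permanentZeros_succ (n : ℕ) :
    (#(permanentZeros F (n + 2)) : ℤ) =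
      (q ^ (n + 1) ^ 2 - #(permanentZeros F (n + 1))) * q ^ (2 * (n + 1)) +
        q * ∑ B ∈ permanentZeros F (n + 1), vAux q (n + 1) (permanentMinors B).rank := by
  rw [← card_filter_add_card_filter_not
    fun A : Matrix (Fin (n + 2)) (Fin (n + 2)) F => (A.submatrix Fin.succ Fin.succ).permanent = 0,
    Nat.cast_add, card_permanentZeros_minor_eq_zero]
  exact (add_comm _ _).trans (congr_arg (· + _) (card_permanentZeros_minor_ne_zero (n + 1)))

theorem sum_vAux_rank_le (n r : ℕ) :
    ∑ B ∈ permanentZeros F (n + 1), vAux q (n + 1) (permanentMinors B).rank ≤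
      ∑ s ∈ range r, #(permanentZerosOfRank F n s) * vAux q (n + 1) s +
        #(permanentZeros F (n + 1)) * vAux q (n + 1) r := by
  have hq : 1 ≤ q := mod_cast Fintype.card_pos
  have h_term (s : ℕ) (hs : s ≤ n + 1) : vAux q (n + 1) s ≤
      ∑ t ∈ range r, (if s = t then vAux q (n + 1) t else 0) + vAux q (n + 1) r := by
    simp only [sum_ite_eq, mem_range]
    split_ifs with h
    · exact le_add_of_nonneg_right (vAux_nonneg hq _ _)
    · rw [zero_add]
      exact vAux_le_vAux hq (not_lt.1 h) hs
  calc
    _ ≤ ∑ B ∈ permanentZeros F (n + 1), (∑ s ∈ range r,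
          (if (permanentMinors B).rank = s then vAux q (n + 1) s else 0) + vAux q (n + 1) r) :=
      sum_le_sum fun B _ => h_term _ (permanentMinors B).rank_le_width
    _ = _ := by
      rw [sum_add_distrib, sum_const, nsmul_eq_mul, sum_comm]
      simp only [← sum_filter, sum_const, nsmul_eq_mul, permanentZerosOfRank]

end Recursion

section CoordinateCount

variable {ι α : Type*} [DecidableEq ι] [Fintype α] {d : ι → ℕ} {P : (ι → α) → Prop}
  [DecidablePred P]

open Function

theorem le_card_filter_update {i : ι} (h : ∀ a, P a → #{t | ¬P (update a i t)} ≤ d i)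
    {a : ι → α} (ha : P a) : Fintype.card α - d i ≤ #{t | P (update a i t)} := by
  rw [Nat.sub_le_iff_le_add, ← card_univ, ← card_filter_add_card_filter_not
    fun t => P (update a i t)]
  gcongr
  exact h a ha

variable [Fintype ι]

theorem prod_card_sub_le_card_filter_agree (h : ∀ a i, P a → #{t | ¬P (update a i t)} ≤ d i)
    (s : Finset ι) {a : ι → α} (ha : P a) [DecidablePred fun b : ι → α => ∀ i ∉ s, b i = a i] :
    ∏ i ∈ s, (Fintype.card α - d i) ≤ #{b | P b ∧ ∀ i ∉ s, b i = a i} := by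
  classical
  induction s using Finset.induction_on generalizing a with
  | empty =>
    rw [prod_empty, Nat.one_le_iff_ne_zero, card_ne_zero]
    exact ⟨a, by simp [ha]⟩
  | insert i s hi ih =>
    let agreeing (t : α) : Finset (ι → α) := {b | P b ∧ ∀ j ∉ s, b j = update a i t j}
    have h_disjoint : Set.PairwiseDisjoint ({t | P (update a i t)} : Finset α) agreeing := by
      intro t _ u _ htu
      refine disjoint_left.2 fun b hbt hbu => htu ?_
      have h_t := (mem_filter.1 hbt).2.2 i hi
      have h_u := (mem_filter.1 hbu).2.2 i hi
      rw [update_self] at h_t h_u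
      exact h_t.symm.trans h_u
    rw [prod_insert hi]
    calc
      _ ≤ #{t | P (update a i t)} * ∏ j ∈ s, (Fintype.card α - d j) :=
        Nat.mul_le_mul_right _ (le_card_filter_update (fun a => h a i) ha)
      _ ≤ ∑ t with P (update a i t), #(agreeing t) :=
        card_nsmul_le_sum _ _ _ fun t ht => ih (mem_filter.1 ht).2
      _ = #(({t | P (update a i t)} : Finset α).biUnion agreeing) := (card_biUnion h_disjoint).symm
      _ ≤ _ := by
        refine card_le_card fun b hb => ?_
        obtain ⟨t, -, hbt⟩ := mem_biUnion.1 hb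
        obtain ⟨-, hb, h_agree⟩ := mem_filter.1 hbt
        refine mem_filter.2 ⟨mem_univ _, hb, fun j hj => ?_⟩
        rw [mem_insert, not_or] at hj
        rw [h_agree j hj.2, update_of_ne hj.1]

theorem prod_card_sub_le_card_filter (h : ∀ a i, P a → #{t | ¬P (update a i t)} ≤ d i)
    {a : ι → α} (ha : P a) : ∏ i, (Fintype.card α - d i) ≤ #{b | P b} := by
  classical
  simpa using prod_card_sub_le_card_filter_agree h univ ha

end CoordinateCount

section PermanentDegree

open scoped Polynomial

variable {R : Type*} [CommSemiring R]

theorem natDegree_permanent_le {ι : Type*} [Fintype ι] [DecidableEq ι] {M : Matrix ι ι R[X]}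
    {d : ι → ℕ} (hM : ∀ i j, (M i j).natDegree ≤ d j) : M.permanent.natDegree ≤ ∑ j, d j :=
  Polynomial.natDegree_sum_le_of_forall_le _ _ fun σ _ =>
    (Polynomial.natDegree_prod_le _ _).trans (sum_le_sum fun j _ => hM (σ j) j)

theorem natDegree_permanent_submatrix_le_one {ι α β : Type*} [Fintype ι] [DecidableEq ι]
    [DecidableEq β] {M : Matrix α β R[X]} {c : β}
    (hM : ∀ i j, (M i j).natDegree ≤ if j = c then 1 else 0) (f : ι → α) {g : ι → β}
    (hg : g.Injective) : (M.submatrix f g).permanent.natDegree ≤ 1 := by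
  refine (natDegree_permanent_le fun i j => hM (f i) (g j)).trans ?_
  rw [← card_filter, card_le_one]
  intro j hj k hk
  exact hg ((mem_filter.1 hj).2.trans (mem_filter.1 hk).2.symm)

end PermanentDegree

section DodgsonDefect

open scoped Polynomial

variable {R : Type*} [CommRing R] {n : ℕ}

theorem injOn_borderedEquiv_symm_fst [IsDomain R] :
    Set.InjOn (fun A => ((borderedEquiv R n).symm A).1)
      {A | A.permanent = 0 ∧ (A.submatrix Fin.succ Fin.succ).permanent ≠ 0} := by
  intro A hA A' hA' h_block
  obtain ⟨⟨b, a⟩, rfl⟩ := (borderedEquiv R n).surjective A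
  obtain ⟨⟨b', a'⟩, rfl⟩ := (borderedEquiv R n).surjective A'
  obtain rfl : b = b' := by simpa only [Equiv.symm_apply_apply] using h_block
  obtain ⟨h_zero, h_ne⟩ := hA
  have h_zero' := hA'.1
  simp only [borderedEquiv_apply] at h_zero h_zero'
  rw [permanent_bordered] at h_zero h_zero'
  rw [mul_right_cancel₀ h_ne (add_right_cancel (h_zero.trans h_zero'.symm))]

/-- The failure of the permanental analogue of Dodgson condensation. With determinants in place of
permanents it would vanish identically, by the Desnanot–Jacobi identity. -/
def dodgsonDefect (A : Matrix (Fin (n + 2)) (Fin (n + 2)) R) : R :=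
  permanentMinors A 0 0 * permanentMinors A 1 1 - permanentMinors A 0 1 * permanentMinors A 1 0 -
    A.permanent * (A.submatrix (Fin.succ ∘ Fin.succ) (Fin.succ ∘ Fin.succ)).permanent

theorem map_dodgsonDefect {S : Type*} [CommRing S] (φ : R →+* S)
    (A : Matrix (Fin (n + 2)) (Fin (n + 2)) R) :
    φ (dodgsonDefect A) = dodgsonDefect (A.map φ) := by
  simp only [dodgsonDefect, permanentMinors_apply, map_sub, map_mul, map_permanent, submatrix_map]

theorem permanentMinors_bordered_one_one (a : R) (x y : Fin (n + 1) → R)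
    (B : Matrix (Fin (n + 1)) (Fin (n + 1)) R) :
    permanentMinors (bordered a x y B) 1 1 =
      (bordered a (x ∘ Fin.succ) (y ∘ Fin.succ) (B.submatrix Fin.succ Fin.succ)).permanent := by
  rw [permanentMinors_apply]
  congr 1
  ext i j
  cases i using Fin.cases <;> cases j using Fin.cases <;> rfl

theorem dodgsonDefect_bordered (a : R) (x y : Fin (n + 1) → R)
    (B : Matrix (Fin (n + 1)) (Fin (n + 1)) R) :
    dodgsonDefect (bordered a x y B) = dodgsonDefect (bordered 0 x y B) := by
  have h_row (j : Fin (n + 2)) :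
      permanentMinors (bordered a x y B) 0 j = permanentMinors (bordered 0 x y B) 0 j := rfl
  have h_col (i : Fin (n + 2)) :
      permanentMinors (bordered a x y B) i 0 = permanentMinors (bordered 0 x y B) i 0 := by
    rw [permanentMinors_apply, permanentMinors_apply]
    congr 1
    ext k l
    rw [submatrix_apply, submatrix_apply]
    cases i.succAbove k using Fin.cases <;> rfl
  have h_zero_zero : permanentMinors (bordered 0 x y B) 0 0 = B.permanent := rfl
  simp only [dodgsonDefect, h_row, h_col, permanentMinors_bordered_one_one, h_zero_zero]
  rw [permanent_bordered a, permanent_bordered a]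
  have h_central (a : R) : (bordered a x y B).submatrix (Fin.succ ∘ Fin.succ)
      (Fin.succ ∘ Fin.succ) = (B.submatrix Fin.succ Fin.succ).submatrix id id := rfl
  rw [h_central, h_central, submatrix_id_id]
  ring

theorem dodgsonDefect_borderedEquiv (a a' : R)
    (b : Matrix (Fin (n + 1)) (Fin (n + 1)) R × (Fin (n + 1) → R) × (Fin (n + 1) → R)) :
    dodgsonDefect (borderedEquiv R (n + 1) (b, a)) =
      dodgsonDefect (borderedEquiv R (n + 1) (b, a')) :=
  (dodgsonDefect_bordered a _ _ _).trans (dodgsonDefect_bordered a' _ _ _).symm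

theorem dodgsonDefect_update_zero_zero (v : Fin (n + 2) × Fin (n + 2) → R) (t : R) :
    dodgsonDefect (of (Function.curry (Function.update v (0, 0) t))) =
      dodgsonDefect (of (Function.curry v)) := by
  set b := ((borderedEquiv R (n + 1)).symm (of (Function.curry v))).1
  have h_update : of (Function.curry (Function.update v (0, 0) t)) =
      borderedEquiv R (n + 1) (b, t) := by
    ext i j
    cases i using Fin.cases <;> cases j using Fin.cases <;>
      simp [b]
  rw [h_update, dodgsonDefect_borderedEquiv t (v (0, 0))]
  exact congr_arg dodgsonDefect ((borderedEquiv R (n + 1)).apply_symm_apply _)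

theorem dodgsonDefect_eq_zero {F : Type*} [Field F] {A : Matrix (Fin (n + 2)) (Fin (n + 2)) F}
    (hA : A.permanent = 0) (h_rank : (permanentMinors A).rank ≤ 1) : dodgsonDefect A = 0 := by
  have h_det : ((permanentMinors A).submatrix ![0, 1] ![0, 1]).det = 0 := by
    by_contra h
    have h_le := (rank_submatrix_le (permanentMinors A) ![0, 1] ![0, 1]).trans h_rank
    rw [rank_of_det_ne_zero h, Fintype.card_fin] at h_le
    omega
  rw [det_fin_two] at h_det
  rw [dodgsonDefect, hA, zero_mul, sub_zero]
  exact h_det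

theorem swap_zero_one_comp_succ :
    Equiv.swap 0 1 ∘ Fin.succ = Fin.succAbove (1 : Fin (n + 2)) := by
  funext i
  cases i using Fin.cases with
  | zero => simp
  | succ i => simp [Equiv.swap_apply_of_ne_of_ne, Fin.ext_iff]

theorem swap_zero_one_comp_succAbove_one :
    Equiv.swap 0 1 ∘ Fin.succAbove (1 : Fin (n + 2)) = Fin.succ := by
  rw [← swap_zero_one_comp_succ, ← Function.comp_assoc, ← Equiv.coe_trans]
  simp

theorem dodgsonDefect_swap :
    dodgsonDefect ((1 : Matrix (Fin (n + 2)) (Fin (n + 2)) R).submatrix (Equiv.swap 0 1) id) =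
      -2 := by
  set A := (1 : Matrix (Fin (n + 2)) (Fin (n + 2)) R).submatrix (Equiv.swap 0 1) id
  have h_one {m : ℕ} {f g : Fin m → Fin (n + 2)} (hg : g.Injective)
      (h : Equiv.swap 0 1 ∘ f = g) : (A.submatrix f g).permanent = 1 := by
    rw [submatrix_submatrix, h, Function.id_comp, submatrix_one _ hg, permanent_one]
  have h_zero_zero : permanentMinors A 0 0 = 0 := by
    refine permanent_eq_zero_of_row_eq_zero 0 fun j => ?_
    change (1 : Matrix (Fin (n + 2)) (Fin (n + 2)) R) (Equiv.swap 0 1 1) j.succ = 0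
    rw [Equiv.swap_apply_right, one_apply_ne (Fin.succ_ne_zero j).symm]
  have h_zero_one : permanentMinors A 0 1 = 1 :=
    h_one Fin.succAbove_right_injective swap_zero_one_comp_succ
  have h_one_zero : permanentMinors A 1 0 = 1 :=
    h_one Fin.succAbove_right_injective swap_zero_one_comp_succAbove_one
  have h_permanent : A.permanent = 1 := by
    rw [permanent_permute_cols, permanent_one]
  have h_central :
      (A.submatrix (Fin.succ ∘ Fin.succ) (Fin.succ ∘ Fin.succ)).permanent = 1 := by
    refine h_one ((Fin.succ_injective _).comp (Fin.succ_injective n)) ?_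
    rw [← Function.comp_assoc, swap_zero_one_comp_succ]
    rfl
  rw [dodgsonDefect, h_zero_zero, h_zero_one, h_one_zero, h_permanent, h_central]
  ring

theorem natDegree_dodgsonDefect_le_two {M : Matrix (Fin (n + 2)) (Fin (n + 2)) R[X]}
    {c : Fin (n + 2)} (hM : ∀ i j, (M i j).natDegree ≤ if j = c then 1 else 0) :
    (dodgsonDefect M).natDegree ≤ 2 := by
  have h_minor (i j : Fin (n + 2)) : (permanentMinors M i j).natDegree ≤ 1 :=
    natDegree_permanent_submatrix_le_one hM _ Fin.succAbove_right_injective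
  have h_central := natDegree_permanent_submatrix_le_one hM (Fin.succ ∘ Fin.succ)
    ((Fin.succ_injective _).comp (Fin.succ_injective n))
  have h_permanent := natDegree_permanent_submatrix_le_one hM id Function.injective_id
  exact Polynomial.natDegree_sub_le_of_le
    (Polynomial.natDegree_sub_le_of_le
      (Polynomial.natDegree_mul_le_of_le (h_minor 0 0) (h_minor 1 1))
      (Polynomial.natDegree_mul_le_of_le (h_minor 0 1) (h_minor 1 0)))
    (Polynomial.natDegree_mul_le_of_le h_permanent h_central)

theorem exists_eval_eq_dodgsonDefect_update (v : Fin (n + 2) × Fin (n + 2) → R)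
    (c : Fin (n + 2) × Fin (n + 2)) :
    ∃ p : R[X], p.natDegree ≤ 2 ∧
      ∀ t, p.eval t = dodgsonDefect (of (Function.curry (Function.update v c t))) := by
  refine ⟨dodgsonDefect (of (Function.curry (Function.update (Polynomial.C ∘ v) c Polynomial.X))),
    natDegree_dodgsonDefect_le_two (c := c.2) fun i j => ?_, fun t => ?_⟩
  · rw [of_apply, Function.curry_apply, Function.update_apply]
    split_ifs with h_entry h_col
    · exact Polynomial.natDegree_X_le
    · exact absurd (congr_arg Prod.snd h_entry) h_col
    all_goals simp
  · rw [← Polynomial.coe_evalRingHom, map_dodgsonDefect]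
    congr 1
    ext i j
    simp only [map_apply, of_apply, Function.curry_apply, Function.update_apply]
    split_ifs <;> simp

end DodgsonDefect

section RankOne

variable {F : Type*} [Field F] [Fintype F] [DecidableEq F]

theorem card_dodgsonDefect_update_eq_zero_le {n : ℕ} {v : Fin (n + 2) × Fin (n + 2) → F}
    (hv : dodgsonDefect (of (Function.curry v)) ≠ 0) (c : Fin (n + 2) × Fin (n + 2)) :
    #{t | dodgsonDefect (of (Function.curry (Function.update v c t))) = 0} ≤
      if c = (0, 0) then 0 else 2 := by
  split_ifs with hc
  · rw [Nat.le_zero, card_eq_zero, filter_eq_empty_iff]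
    intro t _
    rwa [hc, dodgsonDefect_update_zero_zero]
  · obtain ⟨p, hp_deg, hp_eval⟩ := exists_eval_eq_dodgsonDefect_update v c
    have hp : p ≠ 0 := by
      rintro rfl
      apply hv
      simpa using (hp_eval (v c)).symm
    simp only [← hp_eval]
    refine le_trans (Polynomial.card_le_degree_of_subset_roots fun t ht => ?_) hp_deg
    rw [Polynomial.mem_roots hp]
    exact (mem_filter.1 ht).2

theorem card_dodgsonDefect_ne_zero_ge (h2 : (2 : F) ≠ 0) (n : ℕ) :
    Fintype.card F * (Fintype.card F - 2) ^ ((n + 2) ^ 2 - 1) ≤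
      #{A : Matrix (Fin (n + 2)) (Fin (n + 2)) F | dodgsonDefect A ≠ 0} := by
  let P (v : Fin (n + 2) × Fin (n + 2) → F) : Prop := dodgsonDefect (of (Function.curry v)) ≠ 0
  have h_line (v : Fin (n + 2) × Fin (n + 2) → F) (c : Fin (n + 2) × Fin (n + 2)) (hv : P v) :
      #{t | ¬P (Function.update v c t)} ≤ if c = (0, 0) then 0 else 2 := by
    simpa only [P, not_not] using card_dodgsonDefect_update_eq_zero_le hv c
  have h_swap : P fun c =>
      (1 : Matrix (Fin (n + 2)) (Fin (n + 2)) F).submatrix (Equiv.swap 0 1) id c.1 c.2 :=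
    dodgsonDefect_swap.trans_ne (neg_ne_zero.2 h2)
  calc
    _ = ∏ c : Fin (n + 2) × Fin (n + 2), (Fintype.card F - if c = (0, 0) then 0 else 2) := by
      rw [Fintype.prod_eq_mul_prod_compl (0, 0), if_pos rfl, Nat.sub_zero,
        prod_congr rfl fun c hc => by rw [if_neg (by simpa using hc)], prod_const, card_compl,
        card_singleton, Fintype.card_prod, Fintype.card_fin, ← sq]
    _ ≤ #{v | P v} := prod_card_sub_le_card_filter h_line h_swap
    _ = _ := card_equiv ((Equiv.curry _ _ _).trans of) fun v => by simp [P]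

-- A corner entry that makes the permanent vanish is determined by the rest of the matrix, while
-- `dodgsonDefect` ignores it: each matrix on the left yields `|F|` zeros of `dodgsonDefect`.
theorem card_rank_one_minor_ne_zero_mul_card_le (n : ℕ) :
    #{A ∈ permanentZerosOfRank F (n + 1) 1 | (A.submatrix Fin.succ Fin.succ).permanent ≠ 0} *
        Fintype.card F ≤
      #{A : Matrix (Fin (n + 2)) (Fin (n + 2)) F | dodgsonDefect A = 0} := by
  let e := borderedEquiv F (n + 1)
  set S := {A ∈ permanentZerosOfRank F (n + 1) 1 | (A.submatrix Fin.succ Fin.succ).permanent ≠ 0}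
  rw [← card_univ, ← card_product]
  refine card_le_card_of_injOn (fun p => e ((e.symm p.1).1, p.2)) (fun p hp => ?_) ?_
  · have hA := (mem_filter.1 (mem_product.1 hp).1).1
    obtain ⟨h_zero, h_rank⟩ := mem_filter.1 hA
    refine mem_filter.2 ⟨mem_univ _, ?_⟩
    rw [dodgsonDefect_borderedEquiv _ (e.symm p.1).2]
    change dodgsonDefect (e (e.symm p.1)) = 0
    rw [e.apply_symm_apply]
    exact dodgsonDefect_eq_zero (mem_permanentZeros.1 h_zero) h_rank.le
  · intro p hp p' hp' h_eq
    obtain ⟨h_block, h_snd⟩ := Prod.mk.inj (e.injective h_eq)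
    have h_mem {p} (hp : p ∈ S ×ˢ (univ : Finset F)) :
        p.1.permanent = 0 ∧ (p.1.submatrix Fin.succ Fin.succ).permanent ≠ 0 := by
      obtain ⟨h_zeros, h_ne⟩ := mem_filter.1 (mem_product.1 hp).1
      exact ⟨mem_permanentZeros.1 (mem_filter.1 h_zeros).1, h_ne⟩
    exact Prod.ext (injOn_borderedEquiv_symm_fst (h_mem hp) (h_mem hp') h_block) h_snd

theorem card_rank_one_minor_ne_zero_le (h2 : (2 : F) ≠ 0) (n : ℕ) :
    #{A ∈ permanentZerosOfRank F (n + 1) 1 | (A.submatrix Fin.succ Fin.succ).permanent ≠ 0} +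
      (Fintype.card F - 2) ^ ((n + 2) ^ 2 - 1) ≤ Fintype.card F ^ ((n + 2) ^ 2 - 1) := by
  have h_total := card_filter_add_card_filter_not (s := univ)
    fun A : Matrix (Fin (n + 2)) (Fin (n + 2)) F => dodgsonDefect A = 0
  have h_pow : #(univ : Finset (Matrix (Fin (n + 2)) (Fin (n + 2)) F)) =
      Fintype.card F * Fintype.card F ^ ((n + 2) ^ 2 - 1) := by
    rw [card_univ, card_matrix, Fintype.card_fin, ← sq, ← pow_succ',
      Nat.sub_add_cancel (Nat.one_le_pow _ _ (by simp))]
  refine Nat.le_of_mul_le_mul_left ?_ (Fintype.card_pos (α := F))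
  rw [← h_pow, ← h_total, mul_add, mul_comm]
  exact add_le_add (card_rank_one_minor_ne_zero_mul_card_le n) (card_dodgsonDefect_ne_zero_ge h2 n)

end RankOne

section Rank

variable {F ι : Type*} [Field F] [Fintype ι]

theorem rank_eq_zero_iff {κ : Type*} {M : Matrix κ ι F} : M.rank = 0 ↔ M = 0 := by
  classical
  refine ⟨fun h => ?_, fun h => h ▸ rank_zero⟩
  have h_lin : M.mulVecLin = 0 := LinearMap.range_eq_bot.1 (Submodule.finrank_eq_zero.1 h)
  exact mulVec_injective (funext fun x => by simpa using LinearMap.congr_fun h_lin x)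

theorem rank_lt_card_of_det_eq_zero [DecidableEq ι] {M : Matrix ι ι F} (h : M.det = 0) :
    M.rank < Fintype.card ι := by
  obtain ⟨x, hx, hMx⟩ := exists_mulVec_eq_zero_iff.2 h
  have h_ker : LinearMap.ker M.mulVecLin ≠ ⊥ := fun h_bot =>
    hx ((LinearMap.ker_eq_bot'.1 h_bot) x hMx)
  have h_add := LinearMap.finrank_range_add_finrank_ker M.mulVecLin
  rw [Module.finrank_fintype_fun_eq_card] at h_add
  rw [Matrix.rank, ← h_add]
  exact Nat.lt_add_of_pos_right (Submodule.one_le_finrank_iff.2 h_ker)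

end Rank

theorem three_le_card_of_two_ne_zero {F : Type*} [Field F] [Fintype F] (h2 : (2 : F) ≠ 0) :
    3 ≤ Fintype.card F := by
  have h_ne : Fintype.card F ≠ 2 := fun h => h2 (by simpa [h] using Nat.cast_card_eq_zero F)
  have h_one : 1 < Fintype.card F := Fintype.one_lt_card
  omega

section RankBounds

variable {F : Type*} [Field F] [Fintype F] [DecidableEq F]

local notation "q" => (Fintype.card F : ℤ)

theorem card_permanentZerosOfRank_zero_le {l : ℕ → ℤ} {n : ℕ}
    (hl : ∀ m, 1 ≤ m → m ≤ n → l m ≤ #(permanentZeros F m)) :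
    (#(permanentZerosOfRank F (n + 1) 0) : ℤ) ≤
      1 + ∑ k ∈ Icc 1 n, ((n + 2).choose (n + 1 - k) : ℤ) ^ 2 *
        q ^ (2 * (n + 1 - k) * (k + 1)) * (q ^ ((n + 1 - k) ^ 2) - l (n + 1 - k)) := by
  have h_minors : #(permanentZerosOfRank F (n + 1) 0) ≤
      #{A : Matrix (Fin (n + 2)) (Fin (n + 2)) F | permanentMinors A = 0} :=
    card_le_card fun A hA =>
      mem_filter.2 ⟨mem_univ _, rank_eq_zero_iff.1 (mem_filter.1 hA).2⟩
  refine (Nat.cast_le.2 (h_minors.trans (card_permanentMinors_eq_zero_le (n + 1)))).trans ?_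
  rw [sum_range_succ', add_comm]
  push_cast
  refine add_le_add (by simp [permanent_isEmpty, card_matrix F]) ?_
  calc
    _ ≤ ∑ i ∈ range n, ((n + 2).choose (n + 1 - (n - i)) : ℤ) ^ 2 *
        q ^ (2 * (n + 1 - (n - i)) * (n - i + 1)) *
          (q ^ ((n + 1 - (n - i)) ^ 2) - l (n + 1 - (n - i))) := by
      refine sum_le_sum fun i hi => ?_
      have h_lt := mem_range.1 hi
      have h_size : n + 1 - (n - i) = i + 1 := by omega
      have h_compl : n - i + 1 = n + 1 - i := by omega
      rw [h_size, h_compl, ← mul_assoc, card_permanent_ne_zero]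
      gcongr
      exact hl _ (Nat.le_add_left 1 i) h_lt
    _ = _ := by
      refine sum_nbij' (n - ·) (n - ·) ?_ ?_ ?_ ?_ fun i _ => rfl <;>
        simp only [mem_range, mem_Icc] <;> omega

theorem card_permanentZerosOfRank_one_le (h2 : (2 : F) ≠ 0) (n : ℕ) :
    (#(permanentZerosOfRank F (n + 1) 1) : ℤ) ≤
      (q ^ ((n + 2) ^ 2 - 1) - (q - 3) ^ ((n + 2) ^ 2 - 1)) +
        #(permanentZerosOfRank F n 0) * q ^ (2 * (n + 1) + 1) +
        q * #(permanentZeros F (n + 1)) * vAux q (n + 1) 1 := by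
  have hq : 3 ≤ Fintype.card F := three_le_card_of_two_ne_zero h2
  have h_ne : (#{A ∈ permanentZerosOfRank F (n + 1) 1 |
      (A.submatrix Fin.succ Fin.succ).permanent ≠ 0} : ℤ) ≤
        q ^ ((n + 2) ^ 2 - 1) - (q - 3) ^ ((n + 2) ^ 2 - 1) := by
    have h_pow : (q - 3) ^ ((n + 2) ^ 2 - 1) ≤ (q - 2) ^ ((n + 2) ^ 2 - 1) :=
      pow_le_pow_left₀ (by omega) (by omega) _
    have h_count : (_ : ℤ) ≤ _ := Nat.cast_le.2 (card_rank_one_minor_ne_zero_le h2 n)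
    push_cast [Nat.cast_sub (show 2 ≤ Fintype.card F by omega)] at h_count
    linarith
  have h_zero : (#{A ∈ permanentZerosOfRank F (n + 1) 1 |
      (A.submatrix Fin.succ Fin.succ).permanent = 0} : ℤ) ≤
        #(permanentZerosOfRank F n 0) * q ^ (2 * (n + 1) + 1) +
          q * #(permanentZeros F (n + 1)) * vAux q (n + 1) 1 := by
    calc
      _ ≤ (#{A ∈ permanentZeros F (n + 2) |
          (A.submatrix Fin.succ Fin.succ).permanent = 0} : ℤ) :=
        mod_cast card_le_card (filter_subset_filter _ (filter_subset _ _))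
      _ = q * ∑ B ∈ permanentZeros F (n + 1), vAux q (n + 1) (permanentMinors B).rank :=
        card_permanentZeros_minor_eq_zero n
      _ ≤ q * (#(permanentZerosOfRank F n 0) * q ^ (2 * (n + 1)) +
          #(permanentZeros F (n + 1)) * vAux q (n + 1) 1) := by
        gcongr
        simpa only [sum_range_one, vAux_zero] using sum_vAux_rank_le (F := F) n 1
      _ = _ := by ring
  rw [← card_filter_add_card_filter_not fun A : Matrix (Fin (n + 2)) (Fin (n + 2)) F =>
    (A.submatrix Fin.succ Fin.succ).permanent = 0]
  push_cast
  linarith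

end RankBounds

section SmallSizes

theorem permanent_fin_two {R : Type*} [CommSemiring R] (A : Matrix (Fin 2) (Fin 2) R) :
    A.permanent = A 0 0 * A 1 1 + A 0 1 * A 1 0 := by
  simp [permanent_succ_row_zero, Fin.sum_univ_two, permanent_unique]

theorem permanentMinors_fin_one {R : Type*} [CommSemiring R] (A : Matrix (Fin 1) (Fin 1) R) :
    permanentMinors A = 1 := by
  ext i j
  rw [permanentMinors_apply, permanent_isEmpty, Fin.fin_one_eq_zero i, Fin.fin_one_eq_zero j,
    one_apply_eq]

theorem permanentMinors_fin_two {R : Type*} [CommSemiring R] (A : Matrix (Fin 2) (Fin 2) R) :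
    permanentMinors A = !![A 1 1, A 1 0; A 0 1, A 0 0] := by
  ext i j
  fin_cases i <;> fin_cases j <;> simp [permanentMinors_apply, permanent_unique]

theorem rank_permanentMinors_fin_two {F : Type*} [Field F] [DecidableEq F] (h2 : (2 : F) ≠ 0)
    {B : Matrix (Fin 2) (Fin 2) F} (hB : B.permanent = 0) :
    (permanentMinors B).rank = if B = 0 then 0 else if B 0 0 * B 1 1 = 0 then 1 else 2 := by
  have h_det : (permanentMinors B).det = 2 * (B 0 0 * B 1 1) := by
    rw [permanent_fin_two] at hB
    rw [permanentMinors_fin_two, det_fin_two_of]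
    linear_combination -hB
  split_ifs with h_zero h_diag
  · rw [rank_eq_zero_iff, h_zero, permanentMinors_fin_two]
    ext i j
    fin_cases i <;> fin_cases j <;> rfl
  · have h_lt := rank_lt_card_of_det_eq_zero (h_det.trans (by rw [h_diag, mul_zero]))
    have h_ne : (permanentMinors B).rank ≠ 0 := by
      rw [Ne, rank_eq_zero_iff, permanentMinors_fin_two]
      contrapose! h_zero
      ext i j
      have := congr_fun₂ h_zero
      fin_cases i <;> fin_cases j
      · exact this 1 1
      · exact this 1 0
      · exact this 0 1
      · exact this 0 0
    rw [Fintype.card_fin] at h_lt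
    omega
  · rw [rank_of_det_ne_zero (h_det.trans_ne (mul_ne_zero h2 h_diag)), Fintype.card_fin]

variable {F : Type*} [Field F] [Fintype F] [DecidableEq F]

local notation "q" => (Fintype.card F : ℤ)

theorem card_mul_eq_zero : (#{p : F × F | p.1 * p.2 = 0} : ℤ) = 2 * q - 1 := by
  have h_fiber (x : F) : (#{y : F | x * y = 0} : ℤ) = 1 + if x = 0 then q - 1 else 0 := by
    split_ifs with h <;> simp [h, filter_eq']
  simp only [card_filter, Fintype.sum_prod_type] at h_fiber ⊢
  rw [Nat.cast_sum, sum_congr rfl fun x _ => h_fiber x, sum_add_distrib, sum_ite_eq']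
  simp
  ring

theorem card_permanentZeros_one : #(permanentZeros F 1) = 1 := by
  rw [card_eq_one]
  exact ⟨0, by ext A; simp [permanent_unique, ← ext_iff]⟩

theorem card_permanentZeros_two : (#(permanentZeros F 2) : ℤ) = q ^ 3 + q ^ 2 - q := by
  have h_rec : (#(permanentZeros F 2) : ℤ) = (q ^ 1 ^ 2 - #(permanentZeros F 1)) * q ^ (2 * 1) +
      q * ∑ B ∈ permanentZeros F 1, vAux q 1 (permanentMinors B).rank := card_permanentZeros_succ 0
  simp only [h_rec, permanentMinors_fin_one, rank_one, Fintype.card_fin, sum_const,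
    card_permanentZeros_one, vAux]
  ring

theorem card_permanentZeros_two_filter_diag :
    (#{B ∈ permanentZeros F 2 | B 0 0 * B 1 1 = 0} : ℤ) = (2 * q - 1) ^ 2 := by
  rw [← card_mul_eq_zero, sq, ← Nat.cast_mul, ← card_product, Nat.cast_inj]
  refine card_bij' (fun B _ => ((B 0 0, B 1 1), (B 0 1, B 1 0)))
    (fun p _ => !![p.1.1, p.2.1; p.2.2, p.1.2]) ?_ ?_ ?_ ?_
  · intro B hB
    obtain ⟨h_zero, h_diag⟩ := mem_filter.1 hB
    rw [mem_permanentZeros, permanent_fin_two, h_diag, zero_add] at h_zero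
    exact mem_product.2 ⟨mem_filter.2 ⟨mem_univ _, h_diag⟩, mem_filter.2 ⟨mem_univ _, h_zero⟩⟩
  · intro p hp
    obtain ⟨h_diag, h_anti⟩ := mem_product.1 hp
    have h_diag : p.1.1 * p.1.2 = 0 := (mem_filter.1 h_diag).2
    have h_anti : p.2.1 * p.2.2 = 0 := (mem_filter.1 h_anti).2
    simp [permanent_fin_two, -mul_eq_zero, h_diag, h_anti]
  · exact fun B _ => (eta_fin_two B).symm
  · exact fun p _ => rfl

theorem card_permanentZeros_three (h2 : (2 : F) ≠ 0) :
    (#(permanentZeros F 3) : ℤ) =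
      q ^ 9 - (q ^ 3 - 1) * (q ^ 3 - q) * (q ^ 3 - q ^ 2) - q ^ 2 * (q - 1) ^ 5 := by
  have h_term (B : Matrix (Fin 2) (Fin 2) F) (hB : B ∈ permanentZeros F 2) :
      vAux q 2 (permanentMinors B).rank = vAux q 2 2 +
        (if B 0 0 * B 1 1 = 0 then vAux q 2 1 - vAux q 2 2 else 0) +
          if B = 0 then vAux q 2 0 - vAux q 2 1 else 0 := by
    rw [rank_permanentMinors_fin_two h2 (mem_permanentZeros.1 hB)]
    split_ifs with h_zero h_diag h_diag
    · ring
    · simp [h_zero] at h_diag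
    · ring
    · ring
  have h_mem : (0 : Matrix (Fin 2) (Fin 2) F) ∈ permanentZeros F 2 := by simp
  rw [card_permanentZeros_succ 1, sum_congr rfl h_term, sum_add_distrib, sum_add_distrib,
    sum_ite_eq_of_mem' _ _ _ h_mem, ← sum_filter, sum_const, sum_const, nsmul_eq_mul,
    nsmul_eq_mul, card_permanentZeros_two, card_permanentZeros_two_filter_diag]
  simp only [vAux]
  ring

end SmallSizes

/-- The recursions defining the bounding functions `𝔏`, `𝔘`, `𝔑⁽⁰⁾` and `𝔑⁽¹⁾`, at one fixed value
of `q`. The functions are unconstrained at the indices where the paper leaves them undefined. -/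
structure IsBoundingSystem (q : ℤ) (L U N0 N1 : ℕ → ℤ) : Prop where
  lower_one : L 1 = 0
  lower_two : L 2 = 0
  upper_one : U 1 = 1
  upper_two : U 2 = q ^ 3 + q ^ 2 - q
  lower_three : L 3 =
    q ^ 9 - (q ^ 3 - 1) * (q ^ 3 - q) * (q ^ 3 - q ^ 2) - q ^ 2 * (q - 1) ^ 5
  upper_three : U 3 =
    q ^ 9 - (q ^ 3 - 1) * (q ^ 3 - q) * (q ^ 3 - q ^ 2) - q ^ 2 * (q - 1) ^ 5
  rankZero_two : N0 2 = 1
  rankZero_eq (n : ℕ) (hn : 4 ≤ n) : N0 (n - 1) =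
    1 + ∑ k ∈ Icc 1 (n - 3), ((n - 1).choose (n - k - 2) : ℤ) ^ 2 *
      q ^ (2 * (n - k - 2) * (k + 1)) * (q ^ ((n - k - 2) ^ 2) - L (n - k - 2))
  rankOne_eq (n : ℕ) (hn : 4 ≤ n) : N1 (n - 1) =
    (q ^ ((n - 1) ^ 2 - 1) - (q - 3) ^ ((n - 1) ^ 2 - 1)) +
      N0 (n - 2) * q ^ (2 * (n - 2) + 1) + q * U (n - 2) * vAux q (n - 2) 1
  lower_eq (n : ℕ) (hn : 4 ≤ n) : L n = (q ^ ((n - 1) ^ 2) - U (n - 1)) * q ^ (2 * (n - 1))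
  upper_eq (n : ℕ) (hn : 4 ≤ n) : U n =
    (q ^ ((n - 1) ^ 2) - L (n - 1)) * q ^ (2 * (n - 1)) + q * N0 (n - 1) * vAux q (n - 1) 0 +
      q * N1 (n - 1) * vAux q (n - 1) 1 + q * U (n - 1) * vAux q (n - 1) 2

namespace IsBoundingSystem

variable {F : Type*} [Field F] [Fintype F] [DecidableEq F]

local notation "q" => (Fintype.card F : ℤ)

variable {L U N0 N1 : ℕ → ℤ} (h : IsBoundingSystem (Fintype.card F) L U N0 N1) {n : ℕ}
include h

theorem card_permanentZerosOfRank_zero_le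
    (hL : ∀ m, 1 ≤ m → m ≤ n → L m ≤ #(permanentZeros F m)) :
    #(permanentZerosOfRank F (n + 1) 0) ≤ N0 (n + 2) := by
  refine (PermanentCount.card_permanentZerosOfRank_zero_le hL).trans_eq ?_
  obtain _ | n := n
  · simp [h.rankZero_two]
  · refine Eq.trans ?_ (h.rankZero_eq (n + 4) (Nat.le_add_left _ _)).symm
    congr 1
    refine sum_congr rfl fun k _ => ?_
    rw [show n + 4 - k - 2 = n + 1 + 1 - k by omega]
    rfl

theorem card_permanentZerosOfRank_one_le (h2 : (2 : F) ≠ 0)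
    (h0 : #(permanentZerosOfRank F (n + 1) 0) ≤ N0 (n + 2))
    (hU : #(permanentZeros F (n + 2)) ≤ U (n + 2)) :
    #(permanentZerosOfRank F (n + 2) 1) ≤ N1 (n + 3) := by
  have h_vAux : 0 ≤ vAux q (n + 2) 1 := vAux_nonneg (mod_cast Fintype.card_pos) _ _
  calc
    _ ≤ (q ^ ((n + 3) ^ 2 - 1) - (q - 3) ^ ((n + 3) ^ 2 - 1)) +
        #(permanentZerosOfRank F (n + 1) 0) * q ^ (2 * (n + 2) + 1) +
          q * #(permanentZeros F (n + 2)) * vAux q (n + 2) 1 :=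
      PermanentCount.card_permanentZerosOfRank_one_le h2 (n + 1)
    _ ≤ (q ^ ((n + 3) ^ 2 - 1) - (q - 3) ^ ((n + 3) ^ 2 - 1)) +
        N0 (n + 2) * q ^ (2 * (n + 2) + 1) + q * U (n + 2) * vAux q (n + 2) 1 := by
      gcongr
    _ = N1 (n + 3) := (h.rankOne_eq (n + 4) (Nat.le_add_left _ _)).symm

theorem lower_le_card_permanentZeros_succ (hU : #(permanentZeros F (n + 3)) ≤ U (n + 3)) :
    L (n + 4) ≤ #(permanentZeros F (n + 4)) := by
  have h_sum : (0 : ℤ) ≤ ∑ B ∈ permanentZeros F (n + 3), vAux q (n + 3) (permanentMinors B).rank :=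
    sum_nonneg fun _ _ => vAux_nonneg (mod_cast Fintype.card_pos) _ _
  calc
    L (n + 4) = (q ^ (n + 3) ^ 2 - U (n + 3)) * q ^ (2 * (n + 3)) :=
      h.lower_eq (n + 4) (Nat.le_add_left _ _)
    _ ≤ (q ^ (n + 3) ^ 2 - #(permanentZeros F (n + 3))) * q ^ (2 * (n + 3)) := by gcongr
    _ ≤ _ := by
      rw [card_permanentZeros_succ (n + 2)]
      exact le_add_of_nonneg_right (mul_nonneg (Nat.cast_nonneg _) h_sum)

theorem card_permanentZeros_succ_le_upper
    (h0 : #(permanentZerosOfRank F (n + 2) 0) ≤ N0 (n + 3))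
    (h1 : #(permanentZerosOfRank F (n + 2) 1) ≤ N1 (n + 3))
    (hL : L (n + 3) ≤ #(permanentZeros F (n + 3)))
    (hU : #(permanentZeros F (n + 3)) ≤ U (n + 3)) :
    #(permanentZeros F (n + 4)) ≤ U (n + 4) := by
  have h_vAux (r : ℕ) : 0 ≤ vAux q (n + 3) r := vAux_nonneg (mod_cast Fintype.card_pos) _ _
  have h_sum : ∑ B ∈ permanentZeros F (n + 3), vAux q (n + 3) (permanentMinors B).rank ≤
      N0 (n + 3) * vAux q (n + 3) 0 + N1 (n + 3) * vAux q (n + 3) 1 +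
        U (n + 3) * vAux q (n + 3) 2 := by
    refine (sum_vAux_rank_le (n + 2) 2).trans ?_
    rw [sum_range_succ, sum_range_one]
    gcongr <;> exact h_vAux _
  calc
    (#(permanentZeros F (n + 4)) : ℤ)
      = (q ^ (n + 3) ^ 2 - #(permanentZeros F (n + 3))) * q ^ (2 * (n + 3)) +
        q * ∑ B ∈ permanentZeros F (n + 3), vAux q (n + 3) (permanentMinors B).rank :=
      card_permanentZeros_succ (n + 2)
    _ ≤ (q ^ (n + 3) ^ 2 - L (n + 3)) * q ^ (2 * (n + 3)) +
        q * (N0 (n + 3) * vAux q (n + 3) 0 + N1 (n + 3) * vAux q (n + 3) 1 +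
          U (n + 3) * vAux q (n + 3) 2) := by
      gcongr
    _ = (q ^ (n + 3) ^ 2 - L (n + 3)) * q ^ (2 * (n + 3)) + q * N0 (n + 3) * vAux q (n + 3) 0 +
        q * N1 (n + 3) * vAux q (n + 3) 1 + q * U (n + 3) * vAux q (n + 3) 2 := by ring
    _ = U (n + 4) := (h.upper_eq (n + 4) (Nat.le_add_left _ _)).symm

theorem card_permanentZeros_bounds (h2 : (2 : F) ≠ 0) (hn : 1 ≤ n) :
    L n ≤ #(permanentZeros F n) ∧ #(permanentZeros F n) ≤ U n := by
  induction n using Nat.strong_induction_on with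
  | _ n ih =>
  obtain _ | _ | _ | _ | n := n
  · exact absurd hn (by simp)
  · simp [h.lower_one, h.upper_one, card_permanentZeros_one]
  · rw [zero_add, h.lower_two, h.upper_two, ← card_permanentZeros_two]
    exact ⟨by positivity, le_rfl⟩
  · rw [zero_add, h.lower_three, h.upper_three, ← card_permanentZeros_three h2]
    exact ⟨le_rfl, le_rfl⟩
  · have h_lower (m : ℕ) (h_one : 1 ≤ m) (hm : m < n + 4) : L m ≤ #(permanentZeros F m) :=
      (ih m hm h_one).1
    have h_zero (m : ℕ) (hm : m ≤ n + 3) : #(permanentZerosOfRank F (m + 1) 0) ≤ N0 (m + 2) :=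
      h.card_permanentZerosOfRank_zero_le fun k h_one hk => h_lower k h_one (by omega)
    obtain ⟨h_lower_prev, h_upper_prev⟩ := ih (n + 3) (Nat.lt_succ_self _) (Nat.le_add_left _ _)
    have h_rank_one := h.card_permanentZerosOfRank_one_le h2 (h_zero n (by omega))
      (ih (n + 2) (by omega) (by omega)).2
    exact ⟨h.lower_le_card_permanentZeros_succ h_upper_prev,
      h.card_permanentZeros_succ_le_upper (h_zero (n + 1) (by omega)) h_rank_one h_lower_prev
        h_upper_prev⟩

end IsBoundingSystem

end PermanentCount

open Finset PermanentCount in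
theorem permanent_zero_card_bounds_general {F : Type*} [Field F] [Fintype F]
    {L U N0 N1 : ℕ → ℤ} (h : IsBoundingSystem (Fintype.card F) L U N0 N1)
    (hch : ringChar F ≠ 2) {n : ℕ} (hn : 1 ≤ n) :
    L n ≤ (Nat.card {A : Matrix (Fin n) (Fin n) F // A.permanent = 0} : ℤ) ∧
      (Nat.card {A : Matrix (Fin n) (Fin n) F // A.permanent = 0} : ℤ) ≤ U n := by
  classical
  have h_card : Nat.card {A : Matrix (Fin n) (Fin n) F // A.permanent = 0} =
      #(permanentZeros F n) := by
    rw [Nat.card_eq_fintype_card, Fintype.card_subtype, permanentZeros]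
  rw [h_card]
  exact h.card_permanentZeros_bounds (Ring.two_ne_zero hch) hn

/-- Let `𝔏, 𝔘, 𝔑⁽⁰⁾, 𝔑⁽¹⁾` be the recursively defined bounding functions. For every
finite field `F` with `|F| = q > 3` and `char F ≠ 2`, and every `n ≥ 1`,
`𝔏ₙ(q) ≤ |Pₙ(F)| ≤ 𝔘ₙ(q)`. -/
theorem permanent_zero_card_bounds
    (L U N0 N1 : ℕ → ℤ → ℤ)
    (hL1 : ∀ q, L 1 q = 0) (hL2 : ∀ q, L 2 q = 0)
    (hU1 : ∀ q, U 1 q = 1) (hU2 : ∀ q, U 2 q = q ^ 3 + q ^ 2 - q)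
    (hL3 : ∀ q, L 3 q =
      q ^ 9 - (q ^ 3 - 1) * (q ^ 3 - q) * (q ^ 3 - q ^ 2) - q ^ 2 * (q - 1) ^ 5)
    (hU3 : ∀ q, U 3 q =
      q ^ 9 - (q ^ 3 - 1) * (q ^ 3 - q) * (q ^ 3 - q ^ 2) - q ^ 2 * (q - 1) ^ 5)
    (hN0two : ∀ q, N0 2 q = 1)
    (hN0 : ∀ n, 4 ≤ n → ∀ q, N0 (n - 1) q =
      1 + ∑ k ∈ Finset.Icc 1 (n - 3),
        ((n - 1).choose (n - k - 2) : ℤ) ^ 2 * q ^ (2 * (n - k - 2) * (k + 1)) *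
          (q ^ ((n - k - 2) ^ 2) - L (n - k - 2) q))
    (hN1 : ∀ n, 4 ≤ n → ∀ q, N1 (n - 1) q =
      (q ^ ((n - 1) ^ 2 - 1) - (q - 3) ^ ((n - 1) ^ 2 - 1)) +
        N0 (n - 2) q * q ^ (2 * (n - 2) + 1) +
        q * U (n - 2) q * vAux q (n - 2) 1)
    (hL : ∀ n, 4 ≤ n → ∀ q, L n q =
      (q ^ ((n - 1) ^ 2) - U (n - 1) q) * q ^ (2 * (n - 1)))
    (hU : ∀ n, 4 ≤ n → ∀ q, U n q =
      (q ^ ((n - 1) ^ 2) - L (n - 1) q) * q ^ (2 * (n - 1)) +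
        q * N0 (n - 1) q * vAux q (n - 1) 0 +
        q * N1 (n - 1) q * vAux q (n - 1) 1 +
        q * U (n - 1) q * vAux q (n - 1) 2)
    (F : Type) [Field F] [Fintype F]
    (hq : 3 < Fintype.card F) (hch : ringChar F ≠ 2) (n : ℕ) (hn : 1 ≤ n) :
    L n (Fintype.card F) ≤
        (Nat.card {A : Matrix (Fin n) (Fin n) F // A.permanent = 0} : ℤ) ∧
      (Nat.card {A : Matrix (Fin n) (Fin n) F // A.permanent = 0} : ℤ) ≤
        U n (Fintype.card F) := by
  have h : PermanentCount.IsBoundingSystem (Fintype.card F) (L · (Fintype.card F))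
      (U · (Fintype.card F)) (N0 · (Fintype.card F)) (N1 · (Fintype.card F)) :=
    ⟨hL1 _, hL2 _, hU1 _, hU2 _, hL3 _, hU3 _, hN0two _, (hN0 · · _), (hN1 · · _), (hL · · _),
      (hU · · _)⟩
  exact permanent_zero_card_bounds_general h hch hn
end
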